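/- arXiv:1712.06078 — 2 statements merged into one kernel-verified Lean document; each statement's English description precedes it below -/
import Mathlib

section
/- Let G be a connected finite simple graph on the vertex set [n] = {1,…,n}. Then Ω(P_G) = conv((P_G × {1}) ∪ ((−P_G) × {−1})) ⊂ ℝ^{n+1} has the integer decomposition property (is normal) if and only if G does not contain two vertex-disjoint odd cycles. -/
/-- `P × {1} ⊆ ℝ^{d+1}`. -/
def liftTop {d : ℕ} (P : Set (Fin d → ℝ)) : Set (Fin (d + 1) → ℝ) :=
  (fun p => Fin.snoc p (1 : ℝ)) '' P

/-- `(−Q) × {−1} ⊆ ℝ^{d+1}`. -/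
def liftBot {d : ℕ} (Q : Set (Fin d → ℝ)) : Set (Fin (d + 1) → ℝ) :=
  (fun q => Fin.snoc (-q) (-1 : ℝ)) '' Q

/-- `Ω(P,Q) = conv((P × {1}) ∪ ((−Q) × {−1})) ⊆ ℝ^{d+1}`. -/
def Omega {d : ℕ} (P Q : Set (Fin d → ℝ)) : Set (Fin (d + 1) → ℝ) :=
  convexHull ℝ (liftTop P ∪ liftBot Q)

/-- The edge polytope of a finite simple graph `G` on the vertex set `Fin n`:
the convex hull of the vectors `e_i + e_j` for the edges `{i,j}` of `G`. -/
def edgePolytope {n : ℕ} (G : SimpleGraph (Fin n)) : Set (Fin n → ℝ) :=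
  convexHull ℝ {x | ∃ i j : Fin n, G.Adj i j ∧ x = Pi.single i 1 + Pi.single j 1}

/-- A point of `ℝ^m` is a lattice point if all of its coordinates are integers. -/
def IsLatticePt {m : ℕ} (x : Fin m → ℝ) : Prop := ∀ i, ∃ z : ℤ, x i = (z : ℝ)

/-- A lattice polytope `P ⊆ ℝ^m` has the integer decomposition property (is normal)
if every lattice point of `N·P` is a sum of `N` lattice points of `P`. -/
def HasIDP {m : ℕ} (P : Set (Fin m → ℝ)) : Prop :=
  ∀ N : ℕ, 1 ≤ N → ∀ x : Fin m → ℝ,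
    x ∈ (fun y => (N : ℝ) • y) '' P → IsLatticePt x →
      ∃ f : Fin N → (Fin m → ℝ),
        (∀ k, f k ∈ P ∧ IsLatticePt (f k)) ∧ x = ∑ k, f k

/-
`Ω(P_G)` is the absolutely convex hull of the points `(e_i + e_j, 1)` of the edges of `G`. An
absolutely convex hull of finitely many lattice points is normal as soon as every linearly
independent subfamily generates all the lattice points of its span: Carathéodory's argument for the
`ℓ¹` norm makes the coefficients of a lattice point integral without increasing their total size.
If this fails for a graph, the fractional parts of a bad coefficient vector live on a subgraph with
independent edge vectors, so with at most as many edges as vertices and only odd cycles. All degrees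
are at least two, hence equal to two, all coefficients are `1 / 2`, and the last coordinate shows
that the number of vertices is even: the subgraph contains at least two disjoint odd cycles.

Conversely, for disjoint odd cycles `C`, `C'` of lengths `2 * l + 1`, `2 * l' + 1`, half the
difference of their edge sums is a lattice point of `(l + l' + 1) • Ω` of height `l - l'`, tight for
the inequality that the sum of the coordinates over the vertices of `C` is at most `N` plus the
height. In a decomposition all summands are tight. The only lattice point of `Ω` of height `0` is
the origin, which is not tight, so the `l + l' + 1` summands have odd height, contradicting the
parity of `l - l'`.
-/

open Finset Pointwise

namespace EdgePolytope

section IntegerDecomposition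

variable {ι : Type*}

/-- The subgroup `ℤ^m` of `ℝ^m`, so that closure properties of lattice points come from the
`AddSubgroup` API. -/
def integerLattice (m : ℕ) : AddSubgroup (Fin m → ℝ) where
  carrier := {x | IsLatticePt x}
  zero_mem' _ := ⟨0, by simp⟩
  add_mem' hx hy i := by
    obtain ⟨z, hz⟩ := hx i
    obtain ⟨z', hz'⟩ := hy i
    exact ⟨z + z', by simp [hz, hz']⟩
  neg_mem' hx i := by
    obtain ⟨z, hz⟩ := hx i
    exact ⟨-z, by simp [hz]⟩

/-- A family of vectors is unimodular on `s` if every linearly independent subfamily is a basis of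
all the lattice points in its real span. -/
def IsUnimodularOn {m : ℕ} (a : ι → Fin m → ℝ) (s : Set ι) : Prop :=
  ∀ t : Finset ι, ↑t ⊆ s → LinearIndepOn ℝ a t →
    ∀ w : ι → ℝ, IsLatticePt (∑ i ∈ t, w i • a i) → ∀ i ∈ t, ∃ z : ℤ, w i = z

section Caratheodory

variable {𝕜 E : Type*} [Field 𝕜] [LinearOrder 𝕜] [IsStrictOrderedRing 𝕜] [AddCommGroup E]
  [Module 𝕜 E]

lemma abs_mul_add_mul_le {p g σ t : 𝕜} (hσ : |σ| = 1) (hp : 0 ≤ p) (ht : 0 ≤ t)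
    (h : σ * g < 0 → t * |g| ≤ p) : |σ * p + t * g| ≤ p + t * (σ * g) := by
  have hσσ : σ * σ = 1 := by rw [← abs_mul_abs_self, hσ, one_mul]
  have hfactor : σ * p + t * g = σ * (p + t * (σ * g)) := by linear_combination (-t * g) * hσσ
  rw [hfactor, abs_mul, hσ, one_mul, abs_of_nonneg]
  rcases le_or_gt 0 (σ * g) with hg | hg
  · positivity
  · have habs : |g| = -(σ * g) := by rw [← abs_of_neg hg, abs_mul, hσ, one_mul]
    have := h hg
    rw [habs] at this
    linarith

/-- Moving along the linear dependency `g`, in the direction in which the signed total does not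
grow, changes no sign before the first coefficient vanishes. -/
lemma exists_sum_erase_eq_of_dependency {s : Finset ι} [DecidableEq ι] {a : ι → E} {g : ι → 𝕜}
    (w σ : ι → 𝕜) (hσ : ∀ i, |σ i| = 1) (hw : ∀ i, w i = σ i * |w i|)
    (hg : ∑ i ∈ s, g i • a i = 0) (hne : ∃ i ∈ s, g i ≠ 0) (hle : ∑ i ∈ s, σ i * g i ≤ 0) :
    ∃ i ∈ s, ∃ w' : ι → 𝕜, ∑ j ∈ s.erase i, w' j • a j = ∑ j ∈ s, w j • a j ∧
      ∑ j ∈ s.erase i, |w' j| ≤ ∑ j ∈ s, |w j| := by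
  have hD : {i ∈ s | σ i * g i < 0}.Nonempty := by
    by_contra! hempty
    have hnonneg : ∀ i ∈ s, 0 ≤ σ i * g i := by
      simpa only [filter_eq_empty_iff, not_lt] using hempty
    obtain ⟨i, hi, hgi⟩ := hne
    have hzero := (sum_eq_zero_iff_of_nonneg hnonneg).1 (hle.antisymm (sum_nonneg hnonneg)) i hi
    have hσi : σ i ≠ 0 := abs_pos.1 (by rw [hσ]; exact one_pos)
    exact (mul_ne_zero hσi hgi) hzero
  obtain ⟨i, hiD, hmin⟩ := exists_min_image _ (fun i => |w i| / |g i|) hD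
  obtain ⟨hi, hneg⟩ := mem_filter.1 hiD
  set t := |w i| / |g i|
  have ht : 0 ≤ t := by positivity
  have hvanish : w i + t * g i = 0 := by
    have ht' : t * |g i| = |w i| := div_mul_cancel₀ _ (abs_ne_zero.2 (right_ne_zero_of_mul hneg.ne))
    have hbound := abs_mul_add_mul_le (hσ i) (abs_nonneg (w i)) ht fun _ => ht'.le
    have habs : |g i| = -(σ i * g i) := by rw [← abs_of_neg hneg, abs_mul, hσ, one_mul]
    rw [← hw] at hbound
    rw [habs] at ht'
    exact abs_nonpos_iff.1 (hbound.trans (by linarith))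
  refine ⟨i, hi, fun j => w j + t * g j, ?_, ?_⟩
  · rw [sum_erase s (by simp only [hvanish, zero_smul])]
    simp only [add_smul, mul_smul, sum_add_distrib, ← smul_sum, hg, smul_zero, add_zero]
  · calc ∑ j ∈ s.erase i, |w j + t * g j|
        = ∑ j ∈ s, |w j + t * g j| := sum_erase s (by simp only [hvanish, abs_zero])
      _ ≤ ∑ j ∈ s, (|w j| + t * (σ j * g j)) := by
          refine sum_le_sum fun j hj => ?_
          have hstep : σ j * g j < 0 → t * |g j| ≤ |w j| := fun hneg' =>
            (le_div_iff₀ (abs_pos.2 (right_ne_zero_of_mul hneg'.ne))).1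
              (hmin j (mem_filter.2 ⟨hj, hneg'⟩))
          simpa only [← hw] using abs_mul_add_mul_le (hσ j) (abs_nonneg (w j)) ht hstep
      _ = ∑ j ∈ s, |w j| + t * ∑ j ∈ s, σ j * g j := by rw [sum_add_distrib, mul_sum]
      _ ≤ ∑ j ∈ s, |w j| := by linarith [mul_nonpos_of_nonneg_of_nonpos ht hle]

lemma exists_sum_erase_eq_of_not_linearIndepOn [DecidableEq ι] {s : Finset ι} {a : ι → E}
    (h : ¬ LinearIndepOn 𝕜 a s) (w : ι → 𝕜) :
    ∃ i ∈ s, ∃ w' : ι → 𝕜, ∑ j ∈ s.erase i, w' j • a j = ∑ j ∈ s, w j • a j ∧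
      ∑ j ∈ s.erase i, |w' j| ≤ ∑ j ∈ s, |w j| := by
  obtain ⟨g, hg, hne⟩ := not_linearIndepOn_finset_iff.1 h
  obtain ⟨σ, hσ, hw⟩ : ∃ σ : ι → 𝕜, (∀ i, |σ i| = 1) ∧ ∀ i, w i = σ i * |w i| := by
    have hsign : ∀ x : 𝕜, ∃ c : 𝕜, |c| = 1 ∧ x = c * |x| := fun x => by
      rcases abs_choice x with hx | hx
      · exact ⟨1, abs_one, by rw [hx, one_mul]⟩
      · exact ⟨-1, by rw [abs_neg, abs_one], by rw [hx, neg_one_mul, neg_neg]⟩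
    choose σ hσ using fun i => hsign (w i)
    exact ⟨σ, fun i => (hσ i).1, fun i => (hσ i).2⟩
  rcases le_total (∑ i ∈ s, σ i * g i) 0 with hle | hle
  · exact exists_sum_erase_eq_of_dependency w σ hσ hw hg hne hle
  · refine exists_sum_erase_eq_of_dependency (g := -g) w σ hσ hw ?_ ?_ ?_
    · simpa only [Pi.neg_apply, neg_smul, sum_neg_distrib, neg_eq_zero] using hg
    · simpa only [Pi.neg_apply, ne_eq, neg_eq_zero] using hne
    · simpa only [Pi.neg_apply, mul_neg, sum_neg_distrib, neg_nonpos] using hle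

lemma exists_linearIndepOn_sum_eq (a : ι → E) (s : Finset ι) (w : ι → 𝕜) :
    ∃ t ⊆ s, LinearIndepOn 𝕜 a t ∧ ∃ w' : ι → 𝕜,
      ∑ i ∈ t, w' i • a i = ∑ i ∈ s, w i • a i ∧ ∑ i ∈ t, |w' i| ≤ ∑ i ∈ s, |w i| := by
  classical
  induction s using Finset.strongInduction generalizing w with
  | H s ih =>
    by_cases h : LinearIndepOn 𝕜 a s
    · exact ⟨s, Subset.rfl, h, w, rfl, le_rfl⟩
    obtain ⟨i, hi, w₁, hsum₁, hle₁⟩ := exists_sum_erase_eq_of_not_linearIndepOn h w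
    obtain ⟨t, hts, ht, w₂, hsum₂, hle₂⟩ := ih _ (erase_ssubset hi) w₁
    exact ⟨t, hts.trans (erase_subset i s), ht, w₂, hsum₂.trans hsum₁, hle₂.trans hle₁⟩

end Caratheodory

lemma exists_multiset_sum_eq_sum_zsmul {E : Type*} [AddCommGroup E] (a : ι → E) (s : Finset ι)
    (u : ι → ℤ) {N : ℕ} (hu : ∑ i ∈ s, (u i).natAbs ≤ N) :
    ∃ M : Multiset E, M.card = N ∧ (∀ x ∈ M, x ∈ insert 0 (a '' s ∪ -(a '' s))) ∧
      M.sum = ∑ i ∈ s, u i • a i := by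
  let steps : Multiset E := ∑ i ∈ s, Multiset.replicate (u i).natAbs ((u i).sign • a i)
  refine ⟨steps + Multiset.replicate (N - ∑ i ∈ s, (u i).natAbs) 0, ?_, ?_, ?_⟩
  · simp [steps, Multiset.card_sum, hu]
  · intro x hx
    rcases Multiset.mem_add.1 hx with hx | hx
    · obtain ⟨i, hi, hx⟩ := Multiset.mem_sum.1 hx
      rw [Multiset.eq_of_mem_replicate hx]
      rcases lt_trichotomy (u i) 0 with hneg | hzero | hpos
      · refine Or.inr (Or.inr ⟨i, hi, ?_⟩)
        rw [Int.sign_eq_neg_one_of_neg hneg, neg_one_zsmul, neg_neg]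
      · exact Or.inl (by rw [hzero, Int.sign_zero, zero_zsmul])
      · refine Or.inr (Or.inl ⟨i, hi, ?_⟩)
        rw [Int.sign_eq_one_of_pos hpos, one_zsmul]
    · exact Or.inl (Multiset.eq_of_mem_replicate hx)
  · simp only [steps, Multiset.sum_add, Multiset.sum_sum, Multiset.sum_replicate, smul_zero,
      add_zero]
    refine sum_congr rfl fun i _ => ?_
    rw [← natCast_zsmul, smul_smul, mul_comm, Int.sign_mul_natAbs]

lemma exists_fin_sum_eq_multiset_sum {E : Type*} [AddCommMonoid E] (M : Multiset E) :
    ∃ f : Fin M.card → E, (∀ k, f k ∈ M) ∧ M.sum = ∑ k, f k := by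
  obtain ⟨l, rfl⟩ := Quot.exists_rep M
  exact ⟨l.get, fun k => l.get_mem k, (Fin.sum_univ_getElem l).symm⟩

lemma exists_sum_abs_le_one_of_mem_absConvexHull {E : Type*} [AddCommGroup E] [Module ℝ E]
    {a : ι → E} {s : Finset ι} {y : E} (hy : y ∈ absConvexHull ℝ (a '' s)) :
    ∃ w : ι → ℝ, ∑ i ∈ s, |w i| ≤ 1 ∧ ∑ i ∈ s, w i • a i = y := by
  classical
  refine absConvexHull_min (t := {y | ∃ w : ι → ℝ, ∑ i ∈ s, |w i| ≤ 1 ∧ ∑ i ∈ s, w i • a i = y})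
    ?_ ⟨balanced_iff_smul_mem.2 ?_, ?_⟩ hy
  · rintro _ ⟨i, hi, rfl⟩
    have hi' : i ∈ s := hi
    exact ⟨Pi.single i 1, by simp [Pi.single_apply, apply_ite abs, hi'],
      by simp [Pi.single_apply, ite_smul, hi']⟩
  · rintro c hc _ ⟨w, hw, rfl⟩
    refine ⟨c • w, ?_, by simp only [Pi.smul_apply, smul_assoc, smul_sum]⟩
    simp only [Pi.smul_apply, smul_eq_mul, abs_mul, ← mul_sum]
    exact mul_le_one₀ hc (sum_nonneg fun i _ => abs_nonneg (w i)) hw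
  · rintro _ ⟨w, hw, rfl⟩ _ ⟨w', hw', rfl⟩ α β hα hβ hαβ
    refine ⟨α • w + β • w', ?_, ?_⟩
    · calc ∑ i ∈ s, |α * w i + β * w' i|
          ≤ ∑ i ∈ s, (α * |w i| + β * |w' i|) := by
            refine sum_le_sum fun i _ => (abs_add_le _ _).trans ?_
            rw [abs_mul, abs_mul, abs_of_nonneg hα, abs_of_nonneg hβ]
        _ = α * ∑ i ∈ s, |w i| + β * ∑ i ∈ s, |w' i| := by rw [sum_add_distrib, mul_sum, mul_sum]
        _ ≤ α * 1 + β * 1 := by gcongr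
        _ = 1 := by rw [mul_one, mul_one, hαβ]
    · simp only [Pi.add_apply, Pi.smul_apply, add_smul, smul_assoc, sum_add_distrib, smul_sum]

lemma insert_zero_union_neg_subset_absConvexHull {E : Type*} [AddCommGroup E] [Module ℝ E]
    {S : Set E} (hS : S.Nonempty) : insert 0 (S ∪ -S) ⊆ absConvexHull ℝ S := by
  have : Nonempty S := hS.to_subtype
  rintro x (rfl | hx | hx)
  · exact zero_mem_absConvexHull
  · exact subset_absConvexHull hx
  · exact balanced_absConvexHull.neg_mem_iff.1 (subset_absConvexHull hx)

/-- Carathéodory's reduction rewrites `N • y` over a linearly independent subfamily, where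
unimodularity makes the coefficients integers. -/
lemma exists_int_sum_eq_of_isUnimodularOn {m N : ℕ} {a : ι → Fin m → ℝ} {s : Finset ι}
    (huni : IsUnimodularOn a s) {y : Fin m → ℝ} (hy : y ∈ absConvexHull ℝ (a '' s))
    (hNy : IsLatticePt ((N : ℝ) • y)) :
    ∃ u : ι → ℤ, ∑ i ∈ s, (u i).natAbs ≤ N ∧ (N : ℝ) • y = ∑ i ∈ s, u i • a i := by
  classical
  obtain ⟨w, hw, rfl⟩ := exists_sum_abs_le_one_of_mem_absConvexHull hy
  obtain ⟨t, hts, ht, w', hsum, hle⟩ := exists_linearIndepOn_sum_eq a s fun i => N * w i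
  have hNsum : (N : ℝ) • ∑ i ∈ s, w i • a i = ∑ i ∈ t, w' i • a i := by
    simp only [hsum, smul_sum, mul_smul]
  rw [hNsum] at hNy ⊢
  choose! u hu using huni t (coe_subset.2 hts) ht w' hNy
  have hcard : ∑ i ∈ t, (u i).natAbs ≤ N := by
    have : ((∑ i ∈ t, (u i).natAbs : ℕ) : ℝ) ≤ N := calc
      ((∑ i ∈ t, (u i).natAbs : ℕ) : ℝ) = ∑ i ∈ t, |w' i| := by
        push_cast [Nat.cast_natAbs]
        exact sum_congr rfl fun i hi => by rw [hu i hi]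
      _ ≤ ∑ i ∈ s, |N * w i| := hle
      _ = N * ∑ i ∈ s, |w i| := by simp only [abs_mul, Nat.abs_cast, mul_sum]
      _ ≤ N := mul_le_of_le_one_right N.cast_nonneg hw
    exact_mod_cast this
  refine ⟨fun i => if i ∈ t then u i else 0, ?_, ?_⟩
  · simpa only [apply_ite Int.natAbs, Int.natAbs_zero, sum_ite_mem, inter_eq_right.2 hts]
  · simp only [ite_smul, zero_smul, sum_ite_mem, inter_eq_right.2 hts]
    exact sum_congr rfl fun i hi => by rw [hu i hi, Int.cast_smul_eq_zsmul]

lemma hasIDP_of_isUnimodularOn {m : ℕ} {a : ι → Fin m → ℝ} {s : Finset ι}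
    (hlat : ∀ i ∈ s, IsLatticePt (a i)) (huni : IsUnimodularOn a s) :
    HasIDP (absConvexHull ℝ (a '' s)) := by
  rintro N - _ ⟨y, hy, rfl⟩ hNy
  have hsummand : ∀ x ∈ insert 0 (a '' s ∪ -(a '' s)),
      x ∈ absConvexHull ℝ (a '' s) ∧ IsLatticePt x := fun x hx => by
    refine ⟨insert_zero_union_neg_subset_absConvexHull (absConvexHull_nonempty.1 ⟨y, hy⟩) hx, ?_⟩
    rcases hx with rfl | ⟨i, hi, rfl⟩ | ⟨i, hi, hx⟩
    · exact (integerLattice m).zero_mem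
    · exact hlat i hi
    · exact (integerLattice m).neg_mem_iff.1 (hx ▸ hlat i hi)
  obtain ⟨u, hu, hsum⟩ := exists_int_sum_eq_of_isUnimodularOn huni hy hNy
  obtain ⟨M, rfl, hM, hMsum⟩ := exists_multiset_sum_eq_sum_zsmul a s u hu
  obtain ⟨f, hf, hfsum⟩ := exists_fin_sum_eq_multiset_sum M
  exact ⟨f, fun k => hsummand _ (hM _ (hf k)), hsum.trans (hMsum.symm.trans hfsum)⟩

end IntegerDecomposition

section EdgeVectors

variable {V : Type*} {H : SimpleGraph V}

/-- The vector `e_i + e_j` in `ℝ^V` of the edge `e = {i, j}`, as the indicator of the set of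
endpoints. -/
noncomputable def edgeVec (e : Sym2 V) : V → ℝ := (e : Set V).indicator 1

lemma edgeVec_of_mem {e : Sym2 V} {v : V} (h : v ∈ e) : edgeVec e v = 1 :=
  Set.indicator_of_mem (s := (e : Set V)) h 1

lemma edgeVec_of_notMem {e : Sym2 V} {v : V} (h : v ∉ e) : edgeVec e v = 0 :=
  Set.indicator_of_notMem (s := (e : Set V)) h 1

lemma edgeVec_mk [DecidableEq V] {u v : V} (h : u ≠ v) :
    edgeVec s(u, v) = Pi.single u 1 + Pi.single v 1 := by
  ext w
  by_cases hw : w ∈ s(u, v)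
  · rw [edgeVec_of_mem hw]
    rcases Sym2.mem_iff.1 hw with rfl | rfl
    · simp [h]
    · simp [h.symm]
  · rw [edgeVec_of_notMem hw]
    simp_all

lemma sum_smul_edgeVec_apply [Fintype V] [DecidableEq V] [DecidableRel H.Adj] (φ : Sym2 V → ℝ)
    (v : V) : (∑ e ∈ H.edgeFinset, φ e • edgeVec e) v = ∑ e ∈ H.incidenceFinset v, φ e := by
  rw [H.incidenceFinset_eq_filter, sum_filter, Finset.sum_apply]
  refine sum_congr rfl fun e _ => ?_
  split_ifs with hv
  · simp [edgeVec_of_mem hv]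
  · simp [edgeVec_of_notMem hv]

lemma sum_edgeVec [Fintype V] {e : Sym2 V} (he : e ∈ H.edgeSet) : ∑ v, edgeVec e v = 2 := by
  classical
  induction e with
  | h u v => simp [edgeVec_mk he.ne, sum_add_distrib, one_add_one_eq_two]

/-- The alternating sum of the edges of a walk, counted with multiplicity. On an even closed walk
it is the candidate for a linear dependency of the edge vectors. -/
noncomputable def alternatingEdgeSum : ∀ {u v : V}, H.Walk u v → Sym2 V →₀ ℝ
  | _, _, .nil => 0
  | u, _, .cons (v := w) _ p => Finsupp.single s(u, w) 1 - alternatingEdgeSum p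

lemma alternatingEdgeSum_apply_eq_zero {u v : V} (p : H.Walk u v) {e : Sym2 V} (he : e ∉ p.edges) :
    alternatingEdgeSum p e = 0 := by
  induction p with
  | nil => rfl
  | cons h p ih =>
    rw [SimpleGraph.Walk.edges_cons, List.mem_cons, not_or] at he
    simp [alternatingEdgeSum, ih he.2, Ne.symm he.1]

lemma linearCombination_alternatingEdgeSum [DecidableEq V] {u v : V} (p : H.Walk u v) :
    Finsupp.linearCombination ℝ edgeVec (alternatingEdgeSum p) =
      Pi.single u 1 - (-1) ^ p.length • Pi.single v 1 := by
  induction p with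
  | nil => simp [alternatingEdgeSum]
  | cons h p ih =>
    rw [alternatingEdgeSum, map_sub, ih, Finsupp.linearCombination_single, one_smul,
      edgeVec_mk h.ne, SimpleGraph.Walk.length_cons, pow_succ]
    module

lemma odd_length_of_linearIndepOn (hind : LinearIndepOn ℝ edgeVec H.edgeSet) {v : V}
    {c : H.Walk v v} (hc : c.IsCycle) : Odd c.length := by
  classical
  by_contra heven
  rw [Nat.not_odd_iff_even] at heven
  have hsupp : alternatingEdgeSum c ∈ Finsupp.supported ℝ ℝ H.edgeSet := fun e he => by
    by_contra hnot
    exact (Finsupp.mem_support_iff.1 he)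
      (alternatingEdgeSum_apply_eq_zero c fun hec => hnot (c.edges_subset_edgeSet hec))
  have hzero := linearIndepOn_iff.1 hind _ hsupp (by
    rw [linearCombination_alternatingEdgeSum, heven.neg_one_pow, one_smul, sub_self])
  cases c with
  | nil => exact hc.ne_nil rfl
  | @cons _ w _ h p =>
    have hnot := ((SimpleGraph.Walk.cons_isCycle_iff p h).1 hc).2
    have hval := DFunLike.congr_fun hzero s(v, w)
    simp [alternatingEdgeSum, alternatingEdgeSum_apply_eq_zero p hnot] at hval

end EdgeVectors

section HalfIntegral

lemma even_card_of_forall_eq_half {α : Type*} {s : Finset α} {φ : α → ℝ}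
    (hhalf : ∀ e ∈ s, φ e = 1 / 2) (htotal : ∃ z : ℤ, ∑ e ∈ s, φ e = z) : Even #s := by
  obtain ⟨z, hz⟩ := htotal
  rw [sum_congr rfl hhalf, sum_const, nsmul_eq_mul] at hz
  have : ((#s : ℤ) : ℝ) = (z + z : ℤ) := by
    push_cast
    linarith
  exact (Int.even_coe_nat _).1 ⟨z, by exact_mod_cast this⟩

variable {V : Type*} [Fintype V] {H : SimpleGraph V} [DecidableRel H.Adj]

lemma card_edgeFinset_le_card_support (hind : LinearIndepOn ℝ edgeVec H.edgeSet) :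
    #H.edgeFinset ≤ #H.support.toFinset := by
  classical
  let units : Finset (V → ℝ) := H.support.toFinset.image fun v => Pi.single v 1
  have hunits : ∀ v ∈ H.support, Pi.single v 1 ∈ Submodule.span ℝ (units : Set (V → ℝ)) :=
    fun v hv => Submodule.subset_span (mem_coe.2 (mem_image_of_mem _ (Set.mem_toFinset.2 hv)))
  have hspan : Set.range (fun e : H.edgeSet => edgeVec (e : Sym2 V)) ⊆
      Submodule.span ℝ (units : Set (V → ℝ)) := by
    rintro _ ⟨⟨e, he⟩, rfl⟩
    induction e with
    | h u v =>
      change edgeVec s(u, v) ∈ Submodule.span ℝ (units : Set (V → ℝ))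
      rw [edgeVec_mk he.ne]
      exact Submodule.add_mem _ (hunits u ⟨v, he⟩) (hunits v ⟨u, he.symm⟩)
  have hcard := linearIndependent_le_span' _ hind _ hspan
  rw [Cardinal.mk_fintype, Nat.cast_le, ← SimpleGraph.edgeFinset_card] at hcard
  exact (hcard.trans_eq (Fintype.card_coe units)).trans card_image_le

lemma card_edgeFinset_eq_card_support (hind : LinearIndepOn ℝ edgeVec H.edgeSet)
    (hdeg : ∀ v ∈ H.support, 2 ≤ H.degree v) :
    #H.edgeFinset = #H.support.toFinset ∧ ∀ v ∈ H.support, H.degree v = 2 := by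
  have hhandshake := H.sum_degrees_support_eq_twice_card_edges
  have hle := card_edgeFinset_le_card_support hind
  have hge : #H.support.toFinset * 2 ≤ ∑ v ∈ H.support, H.degree v :=
    card_nsmul_le_sum _ _ _ fun v hv => hdeg v (Set.mem_toFinset.1 hv)
  have hcard : #H.edgeFinset = #H.support.toFinset := by lia
  refine ⟨hcard, fun v hv => ?_⟩
  have hsum : ∑ v ∈ H.support, 2 = ∑ v ∈ H.support, H.degree v := by
    rw [hhandshake, hcard, sum_const, smul_eq_mul, mul_comm]
  exact ((sum_eq_sum_iff_of_le fun v hv => hdeg v (Set.mem_toFinset.1 hv)).1 hsum v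
    (Set.mem_toFinset.2 hv)).symm

lemma exists_int_sum_incidenceFinset_eq [DecidableEq V] {φ : Sym2 V → ℝ} {v : V}
    (hv : v ∈ H.support) (hφ : ∀ e ∈ H.edgeSet, φ e ∈ Set.Ioo 0 1)
    (hint : ∃ z : ℤ, (∑ e ∈ H.edgeFinset, φ e • edgeVec e) v = z) :
    ∃ z : ℤ, ∑ e ∈ H.incidenceFinset v, φ e = z ∧ 0 < z ∧ z < H.degree v := by
  obtain ⟨z, hz⟩ := hint
  rw [sum_smul_edgeVec_apply] at hz
  have hφ' : ∀ e ∈ H.incidenceFinset v, φ e ∈ Set.Ioo 0 1 := fun e he =>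
    hφ e ((H.mem_incidenceFinset v e).1 he).1
  have hne : (H.incidenceFinset v).Nonempty := by
    rwa [← card_pos, H.card_incidenceFinset_eq_degree, H.degree_pos_iff_mem_support]
  have hpos : (0 : ℝ) < z := hz ▸ sum_pos (fun e he => (hφ' e he).1) hne
  have hlt : (z : ℝ) < H.degree v := by
    rw [← hz, ← H.card_incidenceFinset_eq_degree, ← nsmul_one, ← sum_const]
    exact sum_lt_sum_of_nonempty hne fun e he => (hφ' e he).2
  exact ⟨z, hz, by exact_mod_cast hpos, by exact_mod_cast hlt⟩

/-- Every vertex sum is `1`, so the difference with the constant weight `1 / 2` is a linear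
dependency. -/
lemma eq_half_of_degree_eq_two {φ : Sym2 V → ℝ} (hind : LinearIndepOn ℝ edgeVec H.edgeSet)
    (hφ : ∀ e ∈ H.edgeSet, φ e ∈ Set.Ioo 0 1)
    (hint : ∀ v, ∃ z : ℤ, (∑ e ∈ H.edgeFinset, φ e • edgeVec e) v = z)
    (hdeg : ∀ v ∈ H.support, H.degree v = 2) : ∀ e ∈ H.edgeFinset, φ e = 1 / 2 := by
  classical
  have hzero : ∑ e ∈ H.edgeFinset, (φ e - 1 / 2) • edgeVec e = 0 := by
    ext v
    rw [sum_smul_edgeVec_apply (fun e => φ e - 1 / 2), sum_sub_distrib, sum_const,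
      H.card_incidenceFinset_eq_degree]
    by_cases hv : v ∈ H.support
    · obtain ⟨z, hz, hz0, hz2⟩ := exists_int_sum_incidenceFinset_eq hv hφ (hint v)
      rw [hdeg v hv] at hz2 ⊢
      obtain rfl : z = 1 := by lia
      simp [hz]
    · have hdeg0 := (H.degree_eq_zero_iff_notMem_support v).2 hv
      have hempty : H.incidenceFinset v = ∅ := by
        rw [← card_eq_zero, H.card_incidenceFinset_eq_degree, hdeg0]
      simp [hempty, hdeg0]
  rw [← H.coe_edgeFinset] at hind
  exact fun e he => sub_eq_zero.1 (linearIndepOn_finset_iff.1 hind _ hzero e he)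

end HalfIntegral

section DisjointOddCycles

variable {V : Type*} {G H : SimpleGraph V}

/-- The graph contains two vertex-disjoint odd cycles: the obstruction to normality. -/
def HasDisjointOddCycles (G : SimpleGraph V) : Prop :=
  ∃ (v w : V) (c : G.Walk v v) (c' : G.Walk w w),
    c.IsCycle ∧ c'.IsCycle ∧ Odd c.length ∧ Odd c'.length ∧ ∀ x ∈ c.support, x ∉ c'.support

lemma HasDisjointOddCycles.mono (hle : H ≤ G) :
    HasDisjointOddCycles H → HasDisjointOddCycles G := by
  rintro ⟨v, w, c, c', hc, hc', hodd, hodd', hdisj⟩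
  refine ⟨v, w, c.mapLe hle, c'.mapLe hle, hc.mapLe hle, hc'.mapLe hle, ?_, ?_, ?_⟩
  · rwa [SimpleGraph.Walk.length_map]
  · rwa [SimpleGraph.Walk.length_map]
  · simpa only [SimpleGraph.Walk.support_mapLe_eq_support] using hdisj

lemma ncard_verts_toSubgraph_of_isCycle {v : V} {c : H.Walk v v} (hc : c.IsCycle) :
    c.toSubgraph.verts.ncard = c.length := by
  classical
  have hverts : c.toSubgraph.verts = c.support.tail.toFinset := by
    ext x
    rw [c.mem_verts_toSubgraph, mem_coe, List.mem_toFinset]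
    refine ⟨fun hx => ?_, List.mem_of_mem_tail⟩
    rw [← c.cons_tail_support, List.mem_cons] at hx
    exact hx.elim (fun h => h ▸ c.end_mem_tail_support hc.not_nil) id
  rw [hverts, Set.ncard_coe_finset, List.toFinset_card_of_nodup hc.support_nodup,
    List.length_tail, c.length_support, Nat.add_sub_cancel]

/-- The cycle of one component has an odd number of vertices, so it cannot exhaust the support. -/
lemma hasDisjointOddCycles_of_isCycles [Finite V] (hcycles : H.IsCycles)
    (hodd : ∀ (v : V) (c : H.Walk v v), c.IsCycle → Odd c.length)
    (heven : Even H.support.ncard) (hne : H.support.Nonempty) : HasDisjointOddCycles H := by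
  have hcycle : ∀ v ∈ H.support, ∃ c : H.Walk v v, c.IsCycle ∧
      c.toSubgraph.verts = (H.connectedComponentMk v).supp := fun v hv =>
    hcycles.exists_cycle_toSubgraph_verts_eq_connectedComponentSupp
      SimpleGraph.ConnectedComponent.connectedComponentMk_mem (H.mem_support.1 hv)
  obtain ⟨v, hv⟩ := hne
  obtain ⟨c, hc, hverts⟩ := hcycle v hv
  obtain ⟨w, hw, hwc⟩ : ∃ w ∈ H.support, w ∉ c.toSubgraph.verts := by
    by_contra! hall
    have hsupp : H.support = c.toSubgraph.verts := Set.Subset.antisymm hall fun x hx =>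
      SimpleGraph.mem_support_of_mem_walk_support c hc.not_nil (c.mem_verts_toSubgraph.1 hx)
    rw [hsupp, ncard_verts_toSubgraph_of_isCycle hc] at heven
    exact Nat.not_even_iff_odd.2 (hodd v c hc) heven
  obtain ⟨c', hc', hverts'⟩ := hcycle w hw
  refine ⟨v, w, c, c', hc, hc', hodd v c hc, hodd w c' hc', fun x hx hx' => hwc ?_⟩
  rw [← SimpleGraph.Walk.mem_verts_toSubgraph, hverts] at hx
  rw [← SimpleGraph.Walk.mem_verts_toSubgraph, hverts'] at hx'
  rw [hverts]
  exact hx'.symm.trans hx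

/-- A non-integral solution forces `H` to be a disjoint union of an even number of odd cycles. -/
lemma hasDisjointOddCycles_of_fractional [Fintype V] [DecidableRel H.Adj] {φ : Sym2 V → ℝ}
    (hind : LinearIndepOn ℝ edgeVec H.edgeSet) (hφ : ∀ e ∈ H.edgeSet, φ e ∈ Set.Ioo 0 1)
    (hint : ∀ v, ∃ z : ℤ, (∑ e ∈ H.edgeFinset, φ e • edgeVec e) v = z)
    (htotal : ∃ z : ℤ, ∑ e ∈ H.edgeFinset, φ e = z) (hne : H.edgeFinset.Nonempty) :
    HasDisjointOddCycles H := by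
  classical
  have hdeg_ge : ∀ v ∈ H.support, 2 ≤ H.degree v := fun v hv => by
    obtain ⟨z, -, hz0, hzdeg⟩ := exists_int_sum_incidenceFinset_eq hv hφ (hint v)
    lia
  obtain ⟨hcard, hdeg⟩ := card_edgeFinset_eq_card_support hind hdeg_ge
  have hcycles : H.IsCycles := fun v hv => by
    rw [Set.ncard_eq_toFinset_card', Set.toFinset_card, H.card_neighborSet_eq_degree]
    exact hdeg v hv
  have heven : Even H.support.ncard := by
    rw [Set.ncard_eq_toFinset_card', ← hcard]
    exact even_card_of_forall_eq_half (eq_half_of_degree_eq_two hind hφ hint hdeg) htotal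
  refine hasDisjointOddCycles_of_isCycles hcycles (fun _ _ => odd_length_of_linearIndepOn hind)
    heven ?_
  obtain ⟨e, he⟩ := hne
  induction e with
  | h u v => exact ⟨u, v, SimpleGraph.mem_edgeFinset.1 he⟩

end DisjointOddCycles

section EdgePoints

variable {n : ℕ} {G : SimpleGraph (Fin n)}

/-- The vertex `(e_i + e_j, 1)` of `P_G × {1}` belonging to the edge `e = {i, j}`. -/
noncomputable def edgePoint (e : Sym2 (Fin n)) : Fin (n + 1) → ℝ :=
  Fin.snoc (α := fun _ => ℝ) (edgeVec e) 1

@[simp]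
lemma edgePoint_castSucc (e : Sym2 (Fin n)) (v : Fin n) : edgePoint e v.castSucc = edgeVec e v :=
  Fin.snoc_castSucc ..

@[simp]
lemma edgePoint_last (e : Sym2 (Fin n)) : edgePoint e (Fin.last n) = 1 := Fin.snoc_last ..

lemma sum_smul_edgePoint_castSucc (s : Finset (Sym2 (Fin n))) (w : Sym2 (Fin n) → ℝ) (v : Fin n) :
    (∑ e ∈ s, w e • edgePoint e) v.castSucc = (∑ e ∈ s, w e • edgeVec e) v := by
  simp

lemma sum_smul_edgePoint_last (s : Finset (Sym2 (Fin n))) (w : Sym2 (Fin n) → ℝ) :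
    (∑ e ∈ s, w e • edgePoint e) (Fin.last n) = ∑ e ∈ s, w e := by
  simp

lemma isLatticePt_edgePoint (e : Sym2 (Fin n)) : IsLatticePt (edgePoint e) := by
  refine Fin.lastCases ⟨1, by simp⟩ fun v => ?_
  by_cases hv : v ∈ e
  · exact ⟨1, by simp [edgeVec_of_mem hv]⟩
  · exact ⟨0, by simp [edgeVec_of_notMem hv]⟩

/-- The last coordinate is half the sum of the others on the points of edges. -/
lemma linearIndepOn_edgeVec {s : Set (Sym2 (Fin n))} (hs : s ⊆ G.edgeSet)
    (hind : LinearIndepOn ℝ edgePoint s) : LinearIndepOn ℝ edgeVec s := by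
  let extend : (Fin n → ℝ) →ₗ[ℝ] Fin (n + 1) → ℝ :=
    LinearMap.pi (Fin.lastCases ((1 / 2 : ℝ) • ∑ v, LinearMap.proj v) LinearMap.proj)
  have hextend : Set.EqOn edgePoint (extend ∘ edgeVec) s := fun e he => by
    ext i
    refine Fin.lastCases ?_ (fun v => ?_) i
    · simp [extend, sum_edgeVec (hs he)]
    · simp [extend]
  exact ((linearIndepOn_congr hextend).1 hind).of_comp extend

lemma edgePolytope_eq_convexHull_edgeVec :
    edgePolytope G = convexHull ℝ (edgeVec '' G.edgeSet) := by
  refine congrArg (convexHull ℝ) (Set.Subset.antisymm ?_ ?_)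
  · rintro _ ⟨i, j, hij, rfl⟩
    exact ⟨s(i, j), hij, edgeVec_mk hij.ne⟩
  · rintro _ ⟨e, he, rfl⟩
    induction e with
    | h i j => exact ⟨i, j, he, edgeVec_mk he.ne⟩

lemma snoc_one_mem_of_mem_edgePolytope {K : Set (Fin (n + 1) → ℝ)} (hK : Convex ℝ K)
    (hG : ∀ e ∈ G.edgeSet, edgePoint e ∈ K) {p : Fin n → ℝ} (hp : p ∈ edgePolytope G) :
    Fin.snoc (α := fun _ => ℝ) p 1 ∈ K := by
  rw [edgePolytope_eq_convexHull_edgeVec] at hp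
  refine convexHull_min (t := {p | Fin.snoc (α := fun _ => ℝ) p 1 ∈ K}) ?_ ?_ hp
  · rintro _ ⟨e, he, rfl⟩
    exact hG e he
  · intro p hp q hq α β hα hβ hαβ
    have hcombo : Fin.snoc (α := fun _ => ℝ) (α • p + β • q) 1 =
        α • Fin.snoc (α := fun _ => ℝ) p 1 + β • Fin.snoc (α := fun _ => ℝ) q 1 := by
      ext i
      refine Fin.lastCases ?_ (fun v => ?_) i
      · simp [hαβ]
      · simp
    exact (congrArg (· ∈ K) hcombo).mpr (hK hp hq hα hβ hαβ)

lemma snoc_neg_neg_one (p : Fin n → ℝ) :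
    Fin.snoc (α := fun _ => ℝ) (-p) (-1) = -Fin.snoc (α := fun _ => ℝ) p 1 := by
  ext i
  refine Fin.lastCases ?_ (fun v => ?_) i <;> simp

lemma Omega_edgePolytope_eq_absConvexHull :
    Omega (edgePolytope G) (edgePolytope G) = absConvexHull ℝ (edgePoint '' G.edgeSet) := by
  have hsnoc : ∀ p ∈ edgePolytope G,
      Fin.snoc (α := fun _ => ℝ) p 1 ∈ absConvexHull ℝ (edgePoint '' G.edgeSet) := fun p hp =>
    snoc_one_mem_of_mem_edgePolytope convex_absConvexHull
      (fun e he => subset_absConvexHull (Set.mem_image_of_mem edgePoint he)) hp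
  have hvec : ∀ e ∈ G.edgeSet, edgeVec e ∈ edgePolytope G := fun e he => by
    rw [edgePolytope_eq_convexHull_edgeVec]
    exact subset_convexHull ℝ _ ⟨e, he, rfl⟩
  refine Set.Subset.antisymm (convexHull_min ?_ convex_absConvexHull) ?_
  · rintro _ (⟨p, hp, rfl⟩ | ⟨p, hp, rfl⟩)
    · exact hsnoc p hp
    · simpa only [snoc_neg_neg_one] using balanced_absConvexHull.neg_mem_iff.2 (hsnoc p hp)
  · rw [← convexHull_union_neg_eq_absConvexHull]
    refine convexHull_mono ?_
    rintro x (⟨e, he, rfl⟩ | ⟨e, he, hx⟩)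
    · exact Or.inl ⟨edgeVec e, hvec e he, rfl⟩
    · exact Or.inr ⟨edgeVec e, hvec e he, (snoc_neg_neg_one _).trans (neg_eq_iff_eq_neg.2 hx)⟩

lemma hasDisjointOddCycles_of_isLatticePt_sum {F : Finset (Sym2 (Fin n))}
    (hF : (F : Set (Sym2 (Fin n))) ⊆ G.edgeSet) (hne : F.Nonempty)
    (hind : LinearIndepOn ℝ edgePoint (F : Set (Sym2 (Fin n)))) {φ : Sym2 (Fin n) → ℝ}
    (hφ : ∀ e ∈ F, φ e ∈ Set.Ioo 0 1) (hlat : IsLatticePt (∑ e ∈ F, φ e • edgePoint e)) :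
    HasDisjointOddCycles G := by
  classical
  obtain ⟨H, hHF⟩ : ∃ H : SimpleGraph (Fin n), H.edgeSet = F := by
    refine ⟨SimpleGraph.fromEdgeSet F, ?_⟩
    rw [SimpleGraph.edgeSet_fromEdgeSet, sdiff_eq_left, Set.disjoint_left]
    exact fun e he => G.not_isDiag_of_mem_edgeSet (hF he)
  obtain rfl : F = H.edgeFinset := by rw [← coe_inj, SimpleGraph.coe_edgeFinset, hHF]
  rw [SimpleGraph.coe_edgeFinset] at hF hind
  refine (hasDisjointOddCycles_of_fractional (linearIndepOn_edgeVec hF hind)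
    (fun e he => hφ e (SimpleGraph.mem_edgeFinset.2 he)) (fun v => ?_) ?_
    hne).mono (SimpleGraph.edgeSet_subset_edgeSet.1 hF)
  · rw [← sum_smul_edgePoint_castSucc]
    exact hlat _
  · rw [← sum_smul_edgePoint_last]
    exact hlat _

lemma isUnimodularOn_edgePoint (h : ¬ HasDisjointOddCycles G) :
    IsUnimodularOn edgePoint G.edgeSet := by
  intro t ht hind w hw
  by_contra! hnot
  obtain ⟨e₀, he₀, hwe₀⟩ := hnot
  have hsum : ∑ e ∈ t with 0 < Int.fract (w e), Int.fract (w e) • edgePoint e =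
      ∑ e ∈ t, w e • edgePoint e - ∑ e ∈ t, ⌊w e⌋ • edgePoint e := by
    have hvanish : ∀ e ∈ t, Int.fract (w e) • edgePoint e ≠ 0 → 0 < Int.fract (w e) :=
      fun e _ hne => (Int.fract_nonneg _).lt_of_ne' (left_ne_zero_of_smul hne)
    rw [sum_filter_of_ne hvanish, ← sum_sub_distrib]
    exact sum_congr rfl fun e _ => by rw [Int.fract, sub_smul, Int.cast_smul_eq_zsmul]
  have hlat : IsLatticePt (∑ e ∈ t with 0 < Int.fract (w e), Int.fract (w e) • edgePoint e) :=
    hsum ▸ (integerLattice _).sub_mem hw ((integerLattice _).sum_mem fun e _ =>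
      (integerLattice _).zsmul_mem (isLatticePt_edgePoint e) _)
  have hsubset : ↑({e ∈ t | 0 < Int.fract (w e)} : Finset _) ⊆ (t : Set (Sym2 (Fin n))) :=
    coe_subset.2 (filter_subset _ _)
  exact h (hasDisjointOddCycles_of_isLatticePt_sum (hsubset.trans ht)
    ⟨e₀, mem_filter.2 ⟨he₀, Int.fract_pos.2 (hwe₀ _)⟩⟩ (hind.mono hsubset)
    (fun e he => ⟨(mem_filter.1 he).2, Int.fract_lt_one _⟩) hlat)

end EdgePoints

section Obstruction

variable {n : ℕ} {G : SimpleGraph (Fin n)} {y : Fin (n + 1) → ℝ}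

lemma sum_mul_le_one_add_last {g : Fin n → ℝ} (hg : ∀ v, 0 ≤ g v)
    (hadj : ∀ u v, G.Adj u v → g u + g v ≤ 2) (hy : y ∈ absConvexHull ℝ (edgePoint '' G.edgeSet)) :
    ∑ v, g v * y v.castSucc ≤ 1 + y (Fin.last n) := by
  let functional : (Fin (n + 1) → ℝ) →ₗ[ℝ] ℝ :=
    ∑ v, g v • LinearMap.proj (Fin.castSucc v) - LinearMap.proj (Fin.last n)
  have happly : ∀ z, functional z = ∑ v, g v * z v.castSucc - z (Fin.last n) := fun z => by
    simp [functional]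
  have hedge : ∀ e ∈ G.edgeSet, |functional (edgePoint e)| ≤ 1 := by
    intro e he
    induction e with
    | h u v =>
      have hvalue : functional (edgePoint s(u, v)) = g u + g v - 1 := by
        simp [happly, edgeVec_mk he.ne, mul_add, sum_add_distrib, Pi.single_apply]
      rw [hvalue, abs_le]
      constructor <;> linarith [hg u, hg v, hadj u v he]
  rw [← convexHull_union_neg_eq_absConvexHull] at hy
  have hle : functional y ≤ 1 := by
    refine convexHull_min (t := {z | functional z ≤ 1}) ?_
      (convex_halfSpace_le functional.isLinear 1) hy
    rintro z (⟨e, he, rfl⟩ | ⟨e, he, hz⟩)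
    · exact (abs_le.1 (hedge e he)).2
    · rw [← neg_eq_iff_eq_neg.2 hz, Set.mem_ofPred_eq, map_neg]
      exact neg_le.1 (abs_le.1 (hedge e he)).1
  rw [happly] at hle
  linarith

lemma abs_last_le_one (hy : y ∈ absConvexHull ℝ (edgePoint '' G.edgeSet)) :
    |y (Fin.last n)| ≤ 1 := by
  have hlower : ∀ z ∈ absConvexHull ℝ (edgePoint '' G.edgeSet), -1 ≤ z (Fin.last n) := by
    intro z hz
    have := sum_mul_le_one_add_last (g := 0) (fun _ => le_rfl) (by simp) hz
    simp only [Pi.zero_apply, zero_mul, sum_const_zero] at this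
    linarith
  have hneg := hlower (-y) (balanced_absConvexHull.neg_mem_iff.2 hy)
  exact abs_le.2 ⟨hlower y hy, by linarith [Pi.neg_apply y (Fin.last n)]⟩

lemma castSucc_eq_zero_of_last_eq_zero (hy : y ∈ absConvexHull ℝ (edgePoint '' G.edgeSet))
    (hlat : IsLatticePt y) (hlast : y (Fin.last n) = 0) (v : Fin n) : y v.castSucc = 0 := by
  have hupper : ∀ z ∈ absConvexHull ℝ (edgePoint '' G.edgeSet),
      2 * z v.castSucc ≤ 1 + z (Fin.last n) := fun z hz => by
    have hg : (0 : Fin n → ℝ) ≤ Pi.single v 2 := Pi.single_nonneg.2 zero_le_two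
    have hadj : ∀ u w, G.Adj u w →
        (Pi.single v 2 : Fin n → ℝ) u + (Pi.single v 2 : Fin n → ℝ) w ≤ 2 := fun u w huw => by
      rcases eq_or_ne u v with rfl | hu
      · simp [Pi.single_eq_of_ne huw.ne.symm]
      · rcases eq_or_ne w v with rfl | hw <;> simp [*]
    simpa [Pi.single_apply] using sum_mul_le_one_add_last hg hadj hz
  have hpos := hupper y hy
  have hneg := hupper (-y) (balanced_absConvexHull.neg_mem_iff.2 hy)
  obtain ⟨z, hz⟩ := hlat v.castSucc
  rw [Pi.neg_apply, Pi.neg_apply] at hneg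
  rw [hlast, hz] at hpos hneg
  have hz1 : z < 1 := by exact_mod_cast (by linarith : (z : ℝ) < 1)
  have hz2 : -1 < z := by exact_mod_cast (by linarith : (-1 : ℝ) < z)
  rw [hz, show z = 0 by lia, Int.cast_zero]

lemma exists_odd_eq_last_of_sum_eq (hy : y ∈ absConvexHull ℝ (edgePoint '' G.edgeSet))
    (hlat : IsLatticePt y) {S : Finset (Fin n)}
    (htight : ∑ v ∈ S, y v.castSucc = 1 + y (Fin.last n)) :
    ∃ r : ℤ, y (Fin.last n) = r ∧ Odd r := by
  obtain ⟨r, hr⟩ := hlat (Fin.last n)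
  have hr1 : |r| ≤ 1 := by exact_mod_cast hr ▸ abs_last_le_one hy
  have hr0 : r ≠ 0 := by
    rintro rfl
    rw [Int.cast_zero] at hr
    simp [castSucc_eq_zero_of_last_eq_zero hy hlat hr, hr] at htight
  obtain ⟨hr_lower, hr_upper⟩ := abs_le.1 hr1
  exact ⟨r, hr, by grind⟩

/-- Every summand of a decomposition of a tight point is itself tight. -/
lemma even_sub_of_sum_eq {N : ℕ} {f : Fin N → Fin (n + 1) → ℝ}
    (hf : ∀ k, f k ∈ absConvexHull ℝ (edgePoint '' G.edgeSet)) (hlat : ∀ k, IsLatticePt (f k))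
    {S : Finset (Fin n)} {h : ℤ} (hlast : ∑ k, f k (Fin.last n) = h)
    (htight : ∑ v ∈ S, ∑ k, f k v.castSucc = N + h) : Even (N - h) := by
  have hle : ∀ k ∈ univ, ∑ v ∈ S, f k v.castSucc ≤ 1 + f k (Fin.last n) := fun k _ => by
    simpa using sum_mul_le_one_add_last (g := fun v => if v ∈ S then 1 else 0)
      (fun v => by split_ifs <;> simp) (fun u v _ => by split_ifs <;> norm_num) (hf k)
  have htotal : ∑ k, ∑ v ∈ S, f k v.castSucc = ∑ k, (1 + f k (Fin.last n)) := by
    rw [sum_comm, htight, sum_add_distrib, hlast]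
    simp
  have htight_each : ∀ k, ∑ v ∈ S, f k v.castSucc = 1 + f k (Fin.last n) := fun k =>
    (sum_eq_sum_iff_of_le hle).1 htotal k (mem_univ k)
  choose r hr hodd using fun k => exists_odd_eq_last_of_sum_eq (hf k) (hlat k) (htight_each k)
  have hh : h = ∑ k, r k := by
    simp only [hr] at hlast
    exact_mod_cast hlast.symm
  have hsum : (N - h : ℤ) = ∑ k, (1 - r k) := by simp [hh]
  exact hsum ▸ even_sum _ fun k _ => odd_one.sub_odd (hodd k)

end Obstruction

section ClosedWalks

variable {n : ℕ} {G : SimpleGraph (Fin n)}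

lemma sum_map_edgePoint_castSucc {u v : Fin n} (p : G.Walk u v) (x : Fin n) :
    (p.edges.map edgePoint).sum x.castSucc =
      2 * p.support.tail.count x + (if u = x then 1 else 0) - (if v = x then 1 else 0) := by
  induction p with
  | nil => simp
  | @cons u w v h p ih =>
    rw [SimpleGraph.Walk.edges_cons, List.map_cons, List.sum_cons, Pi.add_apply, ih,
      edgePoint_castSucc, edgeVec_mk h.ne, Pi.add_apply, Pi.single_apply, Pi.single_apply,
      SimpleGraph.Walk.support_cons, List.tail_cons, ← p.cons_tail_support, List.count_cons]
    simp only [List.tail_cons, beq_iff_eq, Nat.cast_add, Nat.cast_ite, Nat.cast_one,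
      Nat.cast_zero, eq_comm (a := x)]
    ring

lemma sum_map_edgePoint_last (L : List (Sym2 (Fin n))) :
    (L.map edgePoint).sum (Fin.last n) = L.length := by
  induction L with
  | nil => simp
  | cons e L ih => simp [ih, add_comm]

/-- Half the sum of the points of the edges of a walk. For a closed walk its first coordinates
count the visits to each vertex, and its last coordinate is half the length. -/
noncomputable def walkPoint {u v : Fin n} (p : G.Walk u v) : Fin (n + 1) → ℝ :=
  (1 / 2 : ℝ) • (p.edges.map edgePoint).sum

lemma walkPoint_last {u v : Fin n} (p : G.Walk u v) :
    walkPoint p (Fin.last n) = p.length / 2 := by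
  rw [walkPoint, Pi.smul_apply, sum_map_edgePoint_last, p.length_edges, smul_eq_mul]
  ring

lemma walkPoint_castSucc {v : Fin n} (c : G.Walk v v) (x : Fin n) :
    walkPoint c x.castSucc = c.support.tail.count x := by
  rw [walkPoint, Pi.smul_apply, sum_map_edgePoint_castSucc, smul_eq_mul]
  ring

lemma inv_length_smul_sum_mem {E : Type*} [AddCommGroup E] [Module ℝ E] {K : Set E}
    (hK : Convex ℝ K) {L : List E} (hne : L ≠ []) (hL : ∀ x ∈ L, x ∈ K) :
    (L.length : ℝ)⁻¹ • L.sum ∈ K := by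
  rw [← Fin.sum_univ_getElem L, smul_sum]
  exact hK.sum_mem (fun _ _ => by positivity) (by simp [hne]) fun i _ => hL _ (L.getElem_mem _)

variable {l l' : ℕ} {v w : Fin n} {c : G.Walk v v} {c' : G.Walk w w}

lemma walkPoint_sub_last (hc : c.length = 2 * l + 1) (hc' : c'.length = 2 * l' + 1) :
    (walkPoint c - walkPoint c') (Fin.last n) = ((l - l' : ℤ) : ℝ) := by
  rw [Pi.sub_apply, walkPoint_last, walkPoint_last, hc, hc']
  push_cast
  ring

lemma isLatticePt_walkPoint_sub (hc : c.length = 2 * l + 1) (hc' : c'.length = 2 * l' + 1) :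
    IsLatticePt (walkPoint c - walkPoint c') := by
  refine Fin.lastCases ⟨_, walkPoint_sub_last hc hc'⟩ fun x => ?_
  refine ⟨c.support.tail.count x - c'.support.tail.count x, ?_⟩
  rw [Pi.sub_apply, walkPoint_castSucc, walkPoint_castSucc]
  push_cast
  rfl

lemma walkPoint_sub_mem (hc : c.length = 2 * l + 1) (hc' : c'.length = 2 * l' + 1) :
    walkPoint c - walkPoint c' ∈
      (fun y => ((l + l' + 1 : ℕ) : ℝ) • y) '' absConvexHull ℝ (edgePoint '' G.edgeSet) := by
  let L := c.edges.map edgePoint ++ (c'.edges.map edgePoint).map Neg.neg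
  have hlength : L.length = 2 * (l + l' + 1) := by
    simp only [L, List.length_append, List.length_map, c.length_edges, c'.length_edges, hc, hc']
    ring
  have hmem : ∀ x ∈ L, x ∈ absConvexHull ℝ (edgePoint '' G.edgeSet) := by
    intro x hx
    rcases List.mem_append.1 hx with hx | hx
    · obtain ⟨e, he, rfl⟩ := List.mem_map.1 hx
      exact subset_absConvexHull ⟨e, c.edges_subset_edgeSet he, rfl⟩
    · rw [List.map_map] at hx
      obtain ⟨e, he, rfl⟩ := List.mem_map.1 hx
      exact balanced_absConvexHull.neg_mem_iff.2
        (subset_absConvexHull ⟨e, c'.edges_subset_edgeSet he, rfl⟩)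
  have hsum : walkPoint c - walkPoint c' = (1 / 2 : ℝ) • L.sum := by
    rw [List.sum_append, ← List.sum_neg, smul_add, smul_neg, ← sub_eq_add_neg, walkPoint, walkPoint]
  refine ⟨_, inv_length_smul_sum_mem convex_absConvexHull ?_ hmem, ?_⟩
  · exact List.ne_nil_of_length_pos (by lia)
  · simp only [hlength, hsum, smul_smul]
    congr 1
    push_cast
    field_simp

lemma not_hasIDP_of_disjoint_odd (hodd : Odd c.length) (hodd' : Odd c'.length)
    (hdisj : ∀ x ∈ c.support, x ∉ c'.support) :
    ¬ HasIDP (absConvexHull ℝ (edgePoint '' G.edgeSet)) := by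
  intro hIDP
  obtain ⟨l, hc⟩ := hodd
  obtain ⟨l', hc'⟩ := hodd'
  obtain ⟨f, hf, hsum⟩ := hIDP (l + l' + 1) (by lia) _ (walkPoint_sub_mem hc hc')
    (isLatticePt_walkPoint_sub hc hc')
  have hlast : ∑ k, f k (Fin.last n) = ((l - l' : ℤ) : ℝ) := by
    rw [← Finset.sum_apply, ← hsum, walkPoint_sub_last hc hc']
  have hcoord : ∀ x ∈ c.support.tail.toFinset,
      ∑ k, f k x.castSucc = (c.support.tail.count x : ℝ) := fun x hx => by
    have hx' : x ∉ c'.support.tail := fun hmem =>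
      hdisj x (List.mem_of_mem_tail (List.mem_toFinset.1 hx)) (List.mem_of_mem_tail hmem)
    rw [← Finset.sum_apply, ← hsum, Pi.sub_apply, walkPoint_castSucc, walkPoint_castSucc,
      List.count_eq_zero_of_not_mem hx', Nat.cast_zero, sub_zero]
  have htight : ∑ x ∈ c.support.tail.toFinset, ∑ k, f k x.castSucc =
      ((l + l' + 1 : ℕ) : ℝ) + ((l - l' : ℤ) : ℝ) := by
    rw [sum_congr rfl hcoord, ← Nat.cast_sum, List.sum_toFinset_count_eq_length,
      List.length_tail, c.length_support, hc]
    push_cast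
    ring
  have heven := even_sub_of_sum_eq (fun k => (hf k).1) (fun k => (hf k).2) hlast htight
  grind

end ClosedWalks

end EdgePolytope

open EdgePolytope in
theorem stmt11_general {n : ℕ} (G : SimpleGraph (Fin n)) :
    HasIDP (Omega (edgePolytope G) (edgePolytope G)) ↔ ¬ HasDisjointOddCycles G := by
  classical
  rw [Omega_edgePolytope_eq_absConvexHull]
  constructor
  · rintro hIDP ⟨v, w, c, c', -, -, hodd, hodd', hdisj⟩
    exact not_hasIDP_of_disjoint_odd hodd hodd' hdisj hIDP
  · intro hcycles
    have huni := isUnimodularOn_edgePoint hcycles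
    rw [← G.coe_edgeFinset] at huni ⊢
    exact hasIDP_of_isUnimodularOn (fun e _ => isLatticePt_edgePoint e) huni

theorem stmt11 (n : ℕ) (G : SimpleGraph (Fin n))
    (hiso : ∀ v : Fin n, ∃ w, G.Adj v w) (hconn : G.Connected) :
    HasIDP (Omega (edgePolytope G) (edgePolytope G)) ↔
      ¬ ∃ (v w : Fin n) (c : G.Walk v v) (c' : G.Walk w w),
          c.IsCycle ∧ c'.IsCycle ∧ Odd c.length ∧ Odd c'.length ∧
          ∀ x ∈ c.support, x ∉ c'.support :=
  stmt11_general G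
end

section
/- Let G be a connected non-bipartite finite simple graph on the vertex set [n] = {1,…,n}. Then the full-dimensional polytope Ω(Q_G) = conv((Q_G × {1}) ∪ ((−Q_G) × {−1})) ⊂ ℝ^n has the integer decomposition property (is normal) if and only if G does not contain two vertex-disjoint odd cycles. -/
/-- For a graph `G` on the vertex set `Fin (n+1)`, the polytope `Q_G ⊆ ℝ^n`:
the convex hull of the vectors `e_i + e_j` (for edges `{i,j}` of `G`) with the first
coordinate deleted. -/
def fullEdgePolytope {n : ℕ} (G : SimpleGraph (Fin (n + 1))) : Set (Fin n → ℝ) :=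
  convexHull ℝ {x | ∃ i j : Fin (n + 1), G.Adj i j ∧
    x = fun k : Fin n =>
      ((Pi.single i 1 + Pi.single j 1 : Fin (n + 1) → ℝ)) k.succ}

/-!
The map `x ↦ (x₁, …, xₙ, ½ ∑ xᵢ)` identifies `Ω(Q_G)` and the lattice `ℤ^(n+1)` with the convex
hull `P` of the vectors `±(e_i + e_j)`, `{i, j} ∈ E(G)`, and the lattice `D` of integer vectors with
even coordinate sum.

Suppose that `G` has no two disjoint odd cycles. A point of `N P ∩ D` is a combination
`∑ l(e) (e_i + e_j)` with `∑ |l(e)| ≤ N`, and its support can be taken linearly independent, hence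
without even cycles. In the graph of the edges with non-integral `l(e)` every vertex has degree `0`
or at least `2`; by independence it is a disjoint union of cycles, all odd, so at most one. Modulo
`ℤ`, the values of `l` alternate in sign around this odd cycle, so all of them are `1/2`, and so is
their sum; but `∑ l(e)` is half of an even coordinate sum. Hence `l` is integral and the point is a
sum of `N` vectors `0` or `±(e_i + e_j)`.

Conversely, if `A` and `B` are disjoint odd cycles, then `1_A - 1_B` lies in `D` and in `N P` for
`N = (|A| + |B|) / 2`. The points of `P ∩ D` are `0` and `±(e_i + e_j)`, because `P` lies in the
ball of radius `√2`; a sum of `N` of these equal to `1_A - 1_B` would pair off the vertices of `A`,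
which are odd in number.
-/

open Finset

section AbsolutelyConvexHull

variable {𝕜 E M : Type*} [Field 𝕜] [LinearOrder 𝕜] [IsStrictOrderedRing 𝕜]
  [AddCommGroup M] [Module 𝕜 M]

lemma zero_mem_convexHull_union_neg {S : Set M} (hS : S.Nonempty) :
    0 ∈ convexHull 𝕜 (S ∪ -S) := by
  obtain ⟨g, hg⟩ := hS
  have hpos : g ∈ convexHull 𝕜 (S ∪ -S) := subset_convexHull 𝕜 _ (.inl hg)
  have hneg : -g ∈ convexHull 𝕜 (S ∪ -S) := subset_convexHull 𝕜 _ (.inr (Set.neg_mem_neg.2 hg))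
  simpa using (convex_convexHull 𝕜 (S ∪ -S)).midpoint_mem hpos hneg

variable [Fintype E]

lemma convex_setOf_sum_abs_le (s : Set E) (r : 𝕜) :
    Convex 𝕜 {l : E → 𝕜 | Function.support l ⊆ s ∧ ∑ e, |l e| ≤ r} := by
  have hnorm : ConvexOn 𝕜 Set.univ fun l : E → 𝕜 ↦ ∑ e, |l e| := by
    refine ⟨convex_univ, fun l _ l' _ p q hp hq _ ↦ ?_⟩
    simp only [Pi.add_apply, Pi.smul_apply, smul_eq_mul, mul_sum, ← sum_add_distrib]
    gcongr with e
    calc |p * l e + q * l' e| ≤ |p * l e| + |q * l' e| := abs_add_le _ _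
      _ = p * |l e| + q * |l' e| := by rw [abs_mul, abs_mul, abs_of_nonneg hp, abs_of_nonneg hq]
  have hball : Convex 𝕜 {l : E → 𝕜 | ∑ e, |l e| ≤ r} := by simpa using hnorm.convex_le r
  refine Convex.inter (fun l hl l' hl' p q _ _ _ ↦ ?_) hball
  exact (Function.support_add _ _).trans <| Set.union_subset
    ((Function.support_const_smul_subset p l).trans hl)
    ((Function.support_const_smul_subset q l').trans hl')

lemma exists_sum_smul_of_mem_convexHull_union_neg {a : E → M} {s : Set E} {x : M}
    (hx : x ∈ convexHull 𝕜 (a '' s ∪ -(a '' s))) :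
    ∃ l : E → 𝕜, Function.support l ⊆ s ∧ ∑ e, |l e| ≤ 1 ∧ ∑ e, l e • a e = x := by
  classical
  have hsub : a '' s ∪ -(a '' s) ⊆ Fintype.linearCombination 𝕜 a ''
      {l | Function.support l ⊆ s ∧ ∑ e, |l e| ≤ 1} := by
    rintro y (⟨e, he, rfl⟩ | ⟨e, he, hy⟩)
    · exact ⟨Pi.single e 1, ⟨by simpa using he, by simp [Pi.single_apply, apply_ite]⟩, by simp⟩
    · refine ⟨Pi.single e (-1), ⟨by simpa using he, by simp [Pi.single_apply, apply_ite]⟩, ?_⟩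
      simp [hy]
  obtain ⟨l, ⟨hs, hl⟩, rfl⟩ :=
    convexHull_min hsub ((convex_setOf_sum_abs_le s 1).linear_image _) hx
  exact ⟨l, hs, hl, rfl⟩

lemma exists_relation_of_not_linearIndepOn {a : E → M} {l : E → 𝕜}
    (hl : ¬ LinearIndepOn 𝕜 a (Function.support l)) :
    ∃ ρ : E → 𝕜, ∑ e, (l e * ρ e) • a e = 0 ∧ 0 ≤ ∑ e, |l e| * ρ e ∧
      ∃ e, l e ≠ 0 ∧ 0 < ρ e := by
  obtain ⟨μ, hμs, hμa, e₁, hμe₁⟩ : ∃ μ : E → 𝕜, (∀ e, l e = 0 → μ e = 0) ∧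
      ∑ e, μ e • a e = 0 ∧ ∃ e, μ e ≠ 0 := by
    rw [linearIndepOn_iff] at hl
    push Not at hl
    obtain ⟨μ, hμs, hμa, hμ⟩ := hl
    refine ⟨μ, fun e he ↦ not_not.1 fun h ↦ hμs (Finsupp.mem_support_iff.2 h) he, ?_,
      Finsupp.ne_iff.1 hμ⟩
    rwa [Finsupp.linearCombination_apply, Finsupp.sum_fintype _ _ (by simp)] at hμa
  wlog hpos : 0 ≤ ∑ e, |l e| * (μ e / l e) generalizing μ
  · refine this (-μ) (by simpa using hμs) (by simpa using hμa) (by simpa using hμe₁) ?_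
    simpa [neg_div] using (not_le.1 hpos).le
  have hle₁ : l e₁ ≠ 0 := fun h ↦ hμe₁ (hμs e₁ h)
  refine ⟨μ / l, ?_, hpos, ?_⟩
  · have (e : E) : l e * (μ e / l e) = μ e := mul_div_cancel_of_imp' (hμs e)
    simpa only [Pi.div_apply, this] using hμa
  · by_contra! h
    refine hpos.not_gt (sum_neg' (fun e _ ↦ ?_) ⟨e₁, mem_univ _, ?_⟩)
    · obtain he | he := eq_or_ne (l e) 0
      · simp [he]
      · exact mul_nonpos_of_nonneg_of_nonpos (abs_nonneg _) (h e he)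
    · exact mul_neg_of_pos_of_neg (abs_pos.2 hle₁)
        ((h e₁ hle₁).lt_of_ne (div_ne_zero hμe₁ hle₁))

/- Along a relation `μ` among the vectors of the support, `∑ |l|` varies linearly until the first
coefficient vanishes, so moving in a non-increasing direction loses nothing. -/
lemma exists_support_ssubset_of_not_linearIndepOn {a : E → M} {l : E → 𝕜}
    (hl : ¬ LinearIndepOn 𝕜 a (Function.support l)) :
    ∃ l' : E → 𝕜, Function.support l' ⊂ Function.support l ∧
      ∑ e, |l' e| ≤ ∑ e, |l e| ∧ ∑ e, l' e • a e = ∑ e, l e • a e := by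
  obtain ⟨ρ, hρa, hρ, e₀, hle₀, hρe₀, hmax⟩ : ∃ ρ : E → 𝕜, ∑ e, (l e * ρ e) • a e = 0 ∧
      0 ≤ ∑ e, |l e| * ρ e ∧ ∃ e₀, l e₀ ≠ 0 ∧ 0 < ρ e₀ ∧ ∀ e, l e ≠ 0 → ρ e ≤ ρ e₀ := by
    obtain ⟨ρ, hρa, hρ, e₁, hle₁, hρe₁⟩ := exists_relation_of_not_linearIndepOn hl
    obtain ⟨e₀, he₀, hmax⟩ := exists_max_image {e | l e ≠ 0} ρ ⟨e₁, by simpa using hle₁⟩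
    simp only [mem_filter, mem_univ, true_and] at he₀ hmax
    exact ⟨ρ, hρa, hρ, e₀, he₀, hρe₁.trans_le (hmax e₁ hle₁), hmax⟩
  have habs (e : E) : |l e * (1 - ρ e / ρ e₀)| = |l e| - |l e| * ρ e / ρ e₀ := by
    by_cases he : l e = 0
    · simp [he]
    · rw [abs_mul, abs_of_nonneg (sub_nonneg.2 ((div_le_one hρe₀).2 (hmax e he)))]
      ring
  refine ⟨fun e ↦ l e * (1 - ρ e / ρ e₀), ⟨fun e he ↦ left_ne_zero_of_mul he, fun h ↦ ?_⟩, ?_, ?_⟩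
  · exact h hle₀ (by simp [hρe₀.ne'])
  · simp only [habs, sum_sub_distrib, ← sum_div]
    exact sub_le_self _ (div_nonneg hρ hρe₀.le)
  · calc ∑ e, (l e * (1 - ρ e / ρ e₀)) • a e
        = ∑ e, l e • a e - (ρ e₀)⁻¹ • ∑ e, (l e * ρ e) • a e := by
          simp only [smul_sum, smul_smul, ← sum_sub_distrib, ← sub_smul]
          congr! 2; ring
      _ = ∑ e, l e • a e := by rw [hρa, smul_zero, sub_zero]

lemma exists_linearIndepOn_support (a : E → M) (l : E → 𝕜) :
    ∃ l' : E → 𝕜, Function.support l' ⊆ Function.support l ∧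
      LinearIndepOn 𝕜 a (Function.support l') ∧
      ∑ e, |l' e| ≤ ∑ e, |l e| ∧ ∑ e, l' e • a e = ∑ e, l e • a e := by
  induction h : Function.support l using WellFoundedLT.induction generalizing l with
  | ind S ih =>
    subst h
    by_cases hl : LinearIndepOn 𝕜 a (Function.support l)
    · exact ⟨l, subset_rfl, hl, le_rfl, rfl⟩
    · obtain ⟨m, hm, hml, hma⟩ := exists_support_ssubset_of_not_linearIndepOn hl
      obtain ⟨l', hl', hind, hle, heq⟩ := ih _ hm m rfl
      exact ⟨l', hl'.trans hm.subset, hind, hle.trans hml, heq.trans hma⟩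

end AbsolutelyConvexHull

section IntegerCombinations

variable {E M : Type*} [Fintype E] [AddCommGroup M]

lemma abs_sub_sign_of_ne_zero {z : ℤ} (hz : z ≠ 0) : |z - z.sign| = |z| - 1 := by
  obtain h | h := hz.lt_or_gt
  · rw [Int.sign_eq_neg_one_of_neg h, abs_of_neg h, abs_of_nonpos (by omega)]
    ring
  · rw [Int.sign_eq_one_of_pos h, abs_of_pos h, abs_of_nonneg (by omega)]

lemma exists_fin_sum_eq_sum_zsmul (a : E → M) {s : Set E} {N : ℕ} {m : E → ℤ}
    (hs : Function.support m ⊆ s) (hm : ∑ e, |m e| ≤ N) :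
    ∃ f : Fin N → M, (∀ k, f k ∈ insert 0 (a '' s ∪ -(a '' s))) ∧ ∑ k, f k = ∑ e, m e • a e := by
  classical
  induction N generalizing m with
  | zero =>
    have hzero : ∀ e, m e = 0 := by
      simpa [sum_eq_zero_iff_of_nonneg] using hm.antisymm (sum_nonneg fun e _ ↦ abs_nonneg (m e))
    exact ⟨Fin.elim0, fun k ↦ k.elim0, by simp [hzero]⟩
  | succ N ih =>
    by_cases hzero : m = 0
    · exact ⟨0, fun k ↦ .inl rfl, by simp [hzero]⟩
    obtain ⟨e₀, he₀⟩ : ∃ e₀, m e₀ ≠ 0 := Function.ne_iff.1 hzero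
    let m' : E → ℤ := m - Pi.single e₀ (m e₀).sign
    have habs (e : E) : |m' e| = |m e| - Pi.single (M := fun _ ↦ ℤ) e₀ 1 e := by
      obtain rfl | he := eq_or_ne e e₀
      · simp [m', abs_sub_sign_of_ne_zero he₀]
      · simp [m', he]
    have hm' : ∑ e, |m' e| ≤ N := by
      simp only [habs, sum_sub_distrib, sum_pi_single', mem_univ, if_true]
      push_cast at hm
      linarith
    have hs' : Function.support m' ⊆ s := fun e he ↦ by
      obtain rfl | hne := eq_or_ne e e₀
      · exact hs he₀
      · exact hs (by simpa [m', hne] using he)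
    obtain ⟨f, hf, hsum⟩ := ih hs' hm'
    refine ⟨Fin.cons ((m e₀).sign • a e₀) f, Fin.forall_fin_succ.2 ⟨?_, hf⟩, ?_⟩
    · obtain h | h := he₀.lt_or_gt
      · exact .inr (.inr ⟨e₀, hs he₀, by simp [Int.sign_eq_neg_one_of_neg h]⟩)
      · exact .inr (.inl ⟨e₀, hs he₀, by simp [Int.sign_eq_one_of_pos h]⟩)
    · rw [Fin.sum_cons, hsum]
      simp [m', sub_smul, Pi.single_apply, ite_smul]

end IntegerCombinations

/-- The integers as a subring of `R`. -/
abbrev integers (R : Type*) [Ring R] : Subring R := (Int.castRingHom R).range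

lemma indicator_one_mem_integers {R V : Type*} [Ring R] (S : Set V) (v : V) :
    S.indicator (1 : V → R) v ∈ integers R := by
  by_cases h : v ∈ S <;> simp [h]

section ShortVectors

variable {𝕜 V : Type*} [Field 𝕜] [LinearOrder 𝕜] [IsStrictOrderedRing 𝕜] [Fintype V]

/- By convexity some `g ∈ S` has `x ⬝ᵥ x ≤ x ⬝ᵥ g`. If the integer `x ⬝ᵥ g` is at least `2`, then
`x - g` has length `0`; otherwise the even integer `x ⬝ᵥ x` is at most `1`. -/
lemma eq_zero_or_mem_of_mem_convexHull {S : Set (V → 𝕜)} (hS : ∀ g ∈ S, g ⬝ᵥ g = 2) {x : V → 𝕜}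
    (hx : x ∈ convexHull 𝕜 S) (hint : ∀ g ∈ S, x ⬝ᵥ g ∈ integers 𝕜)
    (heven : x ⬝ᵥ x / 2 ∈ integers 𝕜) : x = 0 ∨ x ∈ S := by
  have hnonneg (y : V → 𝕜) : 0 ≤ y ⬝ᵥ y := sum_nonneg fun v _ ↦ mul_self_nonneg (y v)
  obtain ⟨g, hg, hxg⟩ : ∃ g ∈ S, x ⬝ᵥ x ≤ x ⬝ᵥ g :=
    ((dotProductBilin 𝕜 𝕜 x).convexOn convex_univ).exists_ge_of_mem_convexHull
      (Set.subset_univ S) hx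
  obtain ⟨z, hz : (z : 𝕜) = x ⬝ᵥ g⟩ := hint g hg
  obtain ⟨y, hy : (y : 𝕜) = x ⬝ᵥ x / 2⟩ := heven
  obtain hz2 | hz1 := le_or_gt 2 z
  · right
    have hsq : (x - g) ⬝ᵥ (x - g) = x ⬝ᵥ x - 2 * x ⬝ᵥ g + 2 := by
      rw [sub_dotProduct, dotProduct_sub, dotProduct_sub, dotProduct_comm g x, hS g hg]
      ring
    have hzero : (x - g) ⬝ᵥ (x - g) ≤ 0 := by
      have : (2 : 𝕜) ≤ z := by exact_mod_cast hz2
      linarith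
    rwa [sub_eq_zero.1 (dotProduct_self_eq_zero.1 (hzero.antisymm (hnonneg _)))]
  · left
    have hy0 : y ≤ 0 := by
      have : (2 * y : 𝕜) ≤ z := by linarith
      have : 2 * y ≤ z := by exact_mod_cast this
      omega
    have hzero : x ⬝ᵥ x ≤ 0 := by
      have : (y : 𝕜) ≤ 0 := by exact_mod_cast hy0
      linarith
    exact dotProduct_self_eq_zero.1 (hzero.antisymm (hnonneg x))

end ShortVectors

section EdgeVector

variable {V : Type*} [DecidableEq V]

/-- The vector `e_a + e_b` of the unordered pair `s(a, b)`; on a diagonal pair it is `2 e_a`. -/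
def edgeVector : Sym2 V → V → ℝ :=
  Sym2.lift ⟨fun a b ↦ Pi.single a 1 + Pi.single b 1, fun _ _ ↦ add_comm _ _⟩

@[simp]
lemma edgeVector_mk (a b : V) : edgeVector s(a, b) = Pi.single a 1 + Pi.single b 1 := rfl

lemma edgeVector_apply_of_not_isDiag {e : Sym2 V} (he : ¬ e.IsDiag) (v : V) :
    edgeVector e v = if v ∈ e then 1 else 0 := by
  induction e with
  | h a b =>
    rw [Sym2.mk_isDiag_iff] at he
    obtain rfl | ha := eq_or_ne v a
    · simp [he]
    · simp [Pi.single_apply, ha]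

variable {H : SimpleGraph V}

lemma single_sub_single_mem_span_edgeVector {u w : V} (p : H.Walk u w) :
    Pi.single u 1 - (-1 : ℝ) ^ p.length • Pi.single w 1 ∈
      Submodule.span ℝ (edgeVector '' p.edgeSet) := by
  induction p with
  | nil => simp
  | @cons u v w h p ih =>
    have hedge : edgeVector s(u, v) ∈ Submodule.span ℝ (edgeVector '' (p.cons h).edgeSet) :=
      Submodule.subset_span (Set.mem_image_of_mem _ List.mem_cons_self)
    have htail : edgeVector '' p.edgeSet ⊆ edgeVector '' (p.cons h).edgeSet :=
      Set.image_mono fun e he ↦ List.mem_cons_of_mem _ he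
    convert sub_mem hedge (Submodule.span_mono htail ih) using 1
    rw [edgeVector_mk, SimpleGraph.Walk.length_cons, pow_succ, mul_neg_one, neg_smul]
    abel

lemma odd_length_of_linearIndepOn_edgeVector (hind : LinearIndepOn ℝ edgeVector H.edgeSet) {v : V}
    {c : H.Walk v v} (hc : c.IsCycle) : Odd c.length := by
  cases c with
  | nil => exact absurd hc SimpleGraph.Walk.not_isCycle_nil
  | @cons _ u _ h p =>
    have hnotMem := (SimpleGraph.Walk.cons_isCycle_iff p h).1 hc |>.2
    by_contra hlen
    rw [SimpleGraph.Walk.length_cons, Nat.not_odd_iff_even, Nat.even_add_one, Nat.not_even_iff_odd]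
      at hlen
    have hspan := single_sub_single_mem_span_edgeVector p
    rw [hlen.neg_one_pow, neg_one_smul, sub_neg_eq_add, add_comm, ← edgeVector_mk] at hspan
    have hsub : insert s(v, u) p.edgeSet ⊆ H.edgeSet :=
      Set.insert_subset h fun e he ↦ p.edges_subset_edgeSet he
    exact (hind.mono hsub).notMem_span_of_insert hnotMem hspan

variable [Fintype V] [DecidableRel H.Adj]

lemma card_edgeFinset_le_of_linearIndepOn_edgeVector
    (hind : LinearIndepOn ℝ edgeVector H.edgeSet) :
    #H.edgeFinset ≤ #{v | H.degree v ≠ 0} := by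
  let B : Finset (V → ℝ) := image (fun v ↦ Pi.single v 1) {v | H.degree v ≠ 0}
  have hB {a b : V} (h : H.Adj a b) : Pi.single a 1 ∈ Submodule.span ℝ (B : Set (V → ℝ)) :=
    Submodule.subset_span <| mem_coe.2 <| mem_image_of_mem _ <| by
      simpa using (H.degree_pos_iff_exists_adj a).2 ⟨b, h⟩ |>.ne'
  have hspan : Set.range (fun e : H.edgeSet ↦ edgeVector (e : Sym2 V)) ≤
      Submodule.span ℝ (B : Set (V → ℝ)) := by
    rintro _ ⟨⟨⟨a, b⟩, h⟩, rfl⟩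
    exact add_mem (hB h) (hB h.symm)
  calc #H.edgeFinset ≤ #B := by
        have := linearIndependent_le_span' _ hind _ hspan
        simpa only [Cardinal.mk_fintype, Nat.cast_le, Fintype.card_coe, ← H.edgeFinset_card,
          Finset.coe_sort_coe] using! this
    _ ≤ #{v | H.degree v ≠ 0} := card_image_le

/- Linear independence allows at most as many edges as non-isolated vertices, so that minimum
degree `2` is only possible if all degrees are `2`. -/
lemma isCycles_of_linearIndepOn_edgeVector (hind : LinearIndepOn ℝ edgeVector H.edgeSet)
    (hdeg : ∀ v, H.degree v ≠ 1) : H.IsCycles := by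
  let W : Finset V := {v | H.degree v ≠ 0}
  have hge : ∀ v ∈ W, 2 ≤ H.degree v := fun v hv ↦ by
    have := hdeg v
    have := (mem_filter.1 hv).2
    omega
  have hsum : ∑ v ∈ W, H.degree v = 2 * #H.edgeFinset := by
    rw [← H.sum_degrees_eq_twice_card_edges, sum_filter_ne_zero]
  have heq : ∑ v ∈ W, 2 = ∑ v ∈ W, H.degree v := by
    refine (sum_le_sum hge).antisymm ?_
    rw [hsum, sum_const, smul_eq_mul, mul_comm]
    exact Nat.mul_le_mul_right 2 (card_edgeFinset_le_of_linearIndepOn_edgeVector hind)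
  intro v hv
  have hvW : v ∈ W := by
    simpa [W] using (H.degree_pos_iff_exists_adj v).2 hv |>.ne'
  rw [Set.ncard_eq_toFinset_card']
  exact ((sum_eq_sum_iff_of_le hge).1 heq v hvW).symm

end EdgeVector

section OddCycles

variable {V : Type*}

/-- `G` contains two vertex-disjoint odd cycles. -/
def HasDisjointOddCycles (G : SimpleGraph V) : Prop :=
  ∃ (v w : V) (c : G.Walk v v) (c' : G.Walk w w), c.IsCycle ∧ c'.IsCycle ∧
    Odd c.length ∧ Odd c'.length ∧ ∀ x ∈ c.support, x ∉ c'.support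

lemma HasDisjointOddCycles.mono {H G : SimpleGraph V} (hHG : H ≤ G) :
    HasDisjointOddCycles H → HasDisjointOddCycles G := by
  rintro ⟨v, w, c, c', hc, hc', hodd, hodd', hdisj⟩
  exact ⟨v, w, c.mapLe hHG, c'.mapLe hHG, hc.mapLe hHG, hc'.mapLe hHG, by simpa, by simpa, by simpa⟩

variable [Finite V] {H : SimpleGraph V}

lemma exists_isCycle_edgeSet_subset (hcyc : H.IsCycles)
    (hodd : ∀ (v : V) (c : H.Walk v v), c.IsCycle → Odd c.length)
    (hdisj : ¬ HasDisjointOddCycles H) (hne : H ≠ ⊥) :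
    ∃ (v : V) (c : H.Walk v v), c.IsCycle ∧ H.edgeSet ⊆ c.edgeSet := by
  have hcomp {u v : V} (huv : H.Adj u v) : ∃ p : H.Walk u u, p.IsCycle ∧
      p.toSubgraph.verts = (H.connectedComponentMk u).supp :=
    hcyc.exists_cycle_toSubgraph_verts_eq_connectedComponentSupp rfl ⟨v, huv⟩
  obtain ⟨u, w, huw⟩ := SimpleGraph.ne_bot_iff_exists_adj.1 hne
  obtain ⟨c, hc, hcverts⟩ := hcomp huw
  refine ⟨u, c, hc, Sym2.ind fun a b hab ↦ ?_⟩
  obtain ⟨c', hc', hcverts'⟩ := hcomp hab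
  have ha : a ∈ c.toSubgraph.verts := by
    rw [hcverts]
    by_contra ha
    refine hdisj ⟨u, a, c, c', hc, hc', hodd _ c hc, hodd _ c' hc', fun x hx hx' ↦ ha ?_⟩
    rw [← c.mem_verts_toSubgraph, hcverts] at hx
    rw [← c'.mem_verts_toSubgraph, hcverts'] at hx'
    exact Eq.trans (Eq.symm hx') hx
  have : H.LocallyFinite := fun v ↦ Fintype.ofFinite _
  exact SimpleGraph.Walk.adj_toSubgraph_iff_mem_edges.1
    ((hc.adj_toSubgraph_iff_of_isCycles hcyc ha b).2 hab)

end OddCycles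

section OddCycleSum

variable {A : Type*} [AddCommGroup A] {Λ : AddSubgroup A}

lemma sum_mem_of_isChain_add_mem {L : List A} (hL : L.IsChain fun x y ↦ x + y ∈ Λ)
    (heven : Even L.length) : L.sum ∈ Λ := by
  induction L using List.twoStepInduction with
  | nil => simp
  | singleton x => simp at heven
  | cons_cons x y L ih _ =>
    obtain ⟨hxy, hyL⟩ := List.isChain_cons_cons.1 hL
    rw [List.sum_cons, List.sum_cons, ← add_assoc]
    exact add_mem hxy (ih hyL.tail (by simpa [Nat.even_add_one] using heven))

variable {V : Type*} [Fintype V] [DecidableEq V] {H : SimpleGraph V} [DecidableRel H.Adj]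
  {l : Sym2 V → A}

lemma add_mem_of_dartAdj (hcyc : H.IsCycles) (hvert : ∀ v, ∑ e ∈ H.incidenceFinset v, l e ∈ Λ)
    {d d' : H.Dart} (hadj : H.DartAdj d d') (hne : d.edge ≠ d'.edge) :
    l d.edge + l d'.edge ∈ Λ := by
  have hmem : d.edge ∈ H.incidenceFinset d.snd :=
    (H.mem_incidenceFinset _ _).2 ⟨d.edge_mem, Sym2.mem_mk_right _ _⟩
  have hmem' : d'.edge ∈ H.incidenceFinset d.snd :=
    (H.mem_incidenceFinset _ _).2 ⟨d'.edge_mem, hadj ▸ Sym2.mem_mk_left _ _⟩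
  have hcard : #(H.incidenceFinset d.snd) = 2 := by
    rw [H.card_incidenceFinset_eq_degree, ← hcyc ⟨d.fst, d.adj.symm⟩, Set.ncard_eq_toFinset_card']
    rfl
  have heq : {d.edge, d'.edge} = H.incidenceFinset d.snd :=
    eq_of_subset_of_card_le (insert_subset hmem (singleton_subset_iff.2 hmem'))
      (by rw [hcard, card_pair hne])
  simpa [← heq, sum_pair hne] using hvert d.snd

lemma isChain_add_mem_of_isTrail (hcyc : H.IsCycles)
    (hvert : ∀ v, ∑ e ∈ H.incidenceFinset v, l e ∈ Λ) {u v : V} {p : H.Walk u v}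
    (hp : p.IsTrail) : (p.edges.map l).IsChain fun x y ↦ x + y ∈ Λ := by
  have hne : p.darts.IsChain fun d d' ↦ d.edge ≠ d'.edge :=
    (List.pairwise_map.1 hp.edges_nodup).isChain
  rw [List.isChain_map, SimpleGraph.Walk.edges, List.isChain_map, List.isChain_iff_getElem]
  exact fun i hi ↦ add_mem_of_dartAdj hcyc hvert (p.isChain_dartAdj_darts.getElem i hi)
    (hne.getElem i hi)

lemma exists_apply_mem_of_isCycle (hcyc : H.IsCycles)
    (hvert : ∀ v, ∑ e ∈ H.incidenceFinset v, l e ∈ Λ) (hsum : ∑ e ∈ H.edgeFinset, l e ∈ Λ)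
    {v : V} {c : H.Walk v v} (hc : c.IsCycle) (hodd : Odd c.length)
    (hedges : H.edgeSet ⊆ c.edgeSet) : ∃ e ∈ H.edgeSet, l e ∈ Λ := by
  have hE : H.edgeFinset = c.edges.toFinset := by
    ext e
    simpa using ⟨fun h ↦ hedges h, fun h ↦ c.edges_subset_edgeSet h⟩
  have hchain := isChain_add_mem_of_isTrail hcyc hvert hc.isTrail
  rw [hE, List.sum_toFinset _ hc.edges_nodup] at hsum
  have hlen : c.edges.length = c.length := c.length_edges
  have hpos : 0 < c.edges.length := hlen ▸ hodd.pos
  obtain ⟨e, L, hL⟩ := List.exists_cons_of_length_pos hpos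
  rw [hL, List.map_cons] at hchain hsum
  rw [List.sum_cons] at hsum
  refine ⟨e, c.edges_subset_edgeSet (hL ▸ List.mem_cons_self), ?_⟩
  have hrest : (L.map l).sum ∈ Λ := by
    refine sum_mem_of_isChain_add_mem hchain.tail ?_
    rw [← hlen, hL, List.length_cons, Nat.odd_add_one, Nat.not_odd_iff_even] at hodd
    rwa [List.length_map]
  exact (add_mem_cancel_right hrest).1 hsum

/- If `H ≠ ⊥`, then `H` is a single odd cycle on which consecutive edges have labels summing into
`Λ`; as the sum of all labels is in `Λ` too, so is the label left over after pairing. -/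
lemma eq_bot_of_forall_notMem (hind : LinearIndepOn ℝ edgeVector H.edgeSet)
    (hdisj : ¬ HasDisjointOddCycles H) (hvert : ∀ v, ∑ e ∈ H.incidenceFinset v, l e ∈ Λ)
    (hsum : ∑ e ∈ H.edgeFinset, l e ∈ Λ) (hl : ∀ e ∈ H.edgeSet, l e ∉ Λ) : H = ⊥ := by
  by_contra hne
  have hdeg (v : V) : H.degree v ≠ 1 := fun hv ↦ by
    rw [← H.card_incidenceFinset_eq_degree, card_eq_one] at hv
    obtain ⟨e, he⟩ := hv
    have hmem : e ∈ H.incidenceFinset v := he ▸ mem_singleton_self e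
    refine hl e ((H.mem_incidenceFinset v e).1 hmem).1 ?_
    simpa [he] using hvert v
  have hcyc := isCycles_of_linearIndepOn_edgeVector hind hdeg
  obtain ⟨v, c, hc, hedges⟩ := exists_isCycle_edgeSet_subset hcyc
    (fun _ _ hc ↦ odd_length_of_linearIndepOn_edgeVector hind hc) hdisj hne
  obtain ⟨e, he, hmem⟩ := exists_apply_mem_of_isCycle hcyc hvert hsum hc
    (odd_length_of_linearIndepOn_edgeVector hind hc) hedges
  exact hl e he hmem

end OddCycleSum

section EvenLattice

variable {V : Type*} [Fintype V]

variable (V) in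
/-- The lattice of integer vectors with even coordinate sum, that is, the root lattice `D_n`. -/
def evenLattice : AddSubgroup (V → ℝ) where
  carrier := {x | (∀ v, x v ∈ integers ℝ) ∧ (∑ v, x v) / 2 ∈ integers ℝ}
  zero_mem' := by simp
  add_mem' hx hy := ⟨fun v ↦ add_mem (hx.1 v) (hy.1 v), by
    simpa only [Pi.add_apply, sum_add_distrib, add_div] using add_mem hx.2 hy.2⟩
  neg_mem' hx := ⟨fun v ↦ neg_mem (hx.1 v), by
    simpa only [Pi.neg_apply, sum_neg_distrib, neg_div] using neg_mem hx.2⟩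

lemma dotProduct_mem_integers {x y : V → ℝ} (hx : x ∈ evenLattice V) (hy : y ∈ evenLattice V) :
    x ⬝ᵥ y ∈ integers ℝ :=
  sum_mem fun v _ ↦ mul_mem (hx.1 v) (hy.1 v)

lemma dotProduct_self_div_two_mem_integers {x : V → ℝ} (hx : x ∈ evenLattice V) :
    x ⬝ᵥ x / 2 ∈ integers ℝ := by
  have hparity (v : V) : (x v * x v - x v) / 2 ∈ integers ℝ := by
    obtain ⟨z, hz : (z : ℝ) = x v⟩ := hx.1 v
    obtain ⟨y, hy⟩ : Even (z * (z - 1)) := Int.even_mul_pred_self z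
    refine ⟨y, ?_⟩
    have hy' : (z : ℝ) * (z - 1) = y + y := by exact_mod_cast hy
    rw [← hz, eq_intCast]
    linarith
  have hsplit : x ⬝ᵥ x / 2 = ∑ v, (x v * x v - x v) / 2 + (∑ v, x v) / 2 := by
    rw [← sum_div, sum_sub_distrib, dotProduct]
    ring
  exact hsplit ▸ add_mem (sum_mem fun v _ ↦ hparity v) hx.2

lemma indicator_sub_mem_evenLattice {S T : Finset V} (h : Even (#S + #T)) :
    (S : Set V).indicator 1 - (T : Set V).indicator 1 ∈ evenLattice V := by
  classical
  have sum_indicator_one (R : Finset V) : ∑ v, (R : Set V).indicator (1 : V → ℝ) v = #R := by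
    simp [Set.indicator_apply]
  refine ⟨fun v ↦ sub_mem (indicator_one_mem_integers _ v) (indicator_one_mem_integers _ v), ?_⟩
  obtain ⟨k, hk⟩ := h
  have hk' : (#S + #T : ℝ) = k + k := by exact_mod_cast hk
  refine ⟨k - #T, ?_⟩
  simp only [Pi.sub_apply, sum_sub_distrib, sum_indicator_one, eq_intCast]
  push_cast
  linarith

variable [DecidableEq V]

lemma sum_edgeVector (e : Sym2 V) : ∑ v, edgeVector e v = 2 := by
  induction e with
  | h a b => simp [sum_add_distrib, one_add_one_eq_two]

lemma sum_eq_two_of_mem_convexHull {s : Set (Sym2 V)}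
    {x : V → ℝ} (hx : x ∈ convexHull ℝ (edgeVector '' s)) : ∑ v, x v = 2 := by
  have hconvex : Convex ℝ {x : V → ℝ | ∑ v, x v = 2} :=
    convex_hyperplane ⟨fun x y ↦ by simp [sum_add_distrib], fun r x ↦ by simp [mul_sum]⟩ 2
  refine convexHull_min ?_ hconvex hx
  rintro _ ⟨e, -, rfl⟩
  exact sum_edgeVector e

lemma edgeVector_mem_evenLattice (e : Sym2 V) : edgeVector e ∈ evenLattice V := by
  refine ⟨?_, by simp [sum_edgeVector, one_mem]⟩
  induction e with
  | h a b =>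
    refine fun v ↦ add_mem ?_ ?_ <;> rw [Pi.single_apply] <;> split_ifs <;> simp [one_mem, zero_mem]

lemma edgeVector_dotProduct_self {e : Sym2 V} (he : ¬ e.IsDiag) :
    edgeVector e ⬝ᵥ edgeVector e = 2 := by
  rw [← sum_edgeVector e]
  refine sum_congr rfl fun v _ ↦ ?_
  simp [edgeVector_apply_of_not_isDiag he]

end EvenLattice

section Normality

variable {M M' : Type*} [AddCommGroup M] [Module ℝ M] [AddCommGroup M'] [Module ℝ M']

/-- The integer decomposition property of `P` with respect to an arbitrary lattice `Λ`. -/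
def HasIDPOver (Λ : AddSubgroup M) (P : Set M) : Prop :=
  ∀ N : ℕ, 1 ≤ N → ∀ x ∈ (fun y ↦ (N : ℝ) • y) '' P, x ∈ Λ →
    ∃ f : Fin N → M, (∀ k, f k ∈ P ∧ f k ∈ Λ) ∧ x = ∑ k, f k

variable {Λ : AddSubgroup M} {Λ' : AddSubgroup M'} {P : Set M}

lemma HasIDPOver.image (hP : HasIDPOver Λ P) (Φ : M ≃ₗ[ℝ] M') (hΛ : ∀ x, Φ x ∈ Λ' ↔ x ∈ Λ) :
    HasIDPOver Λ' (Φ '' P) := by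
  rintro N hN _ ⟨_, ⟨p, hp, rfl⟩, rfl⟩ hx
  obtain ⟨f, hf, hsum⟩ := hP N hN ((N : ℝ) • p) ⟨p, hp, rfl⟩ ((hΛ _).1 (map_smul Φ (N : ℝ) p ▸ hx))
  exact ⟨Φ ∘ f, fun k ↦ ⟨Set.mem_image_of_mem Φ (hf k).1, (hΛ _).2 (hf k).2⟩, by
    simp [← map_smul, hsum]⟩

lemma hasIDPOver_image_iff (Φ : M ≃ₗ[ℝ] M') (hΛ : ∀ x, Φ x ∈ Λ' ↔ x ∈ Λ) :
    HasIDPOver Λ' (Φ '' P) ↔ HasIDPOver Λ P := by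
  refine ⟨fun h ↦ ?_, fun h ↦ h.image Φ hΛ⟩
  have hP : Φ.symm '' (Φ '' P) = P := Φ.toEquiv.symm_image_image P
  exact hP ▸ h.image Φ.symm fun y ↦ by rw [← hΛ, Φ.apply_symm_apply]

variable {V : Type*} [Fintype V] [DecidableEq V]

/-- The convex hull of the vectors `±(e_a + e_b)`, for `{a, b}` an edge of `G`. -/
def symmetrizedEdgePolytope (G : SimpleGraph V) : Set (V → ℝ) :=
  convexHull ℝ (edgeVector '' G.edgeSet ∪ -(edgeVector '' G.edgeSet))

section VertexSums

variable {H : SimpleGraph V} [DecidableRel H.Adj]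

lemma sum_smul_edgeVector_apply (l : Sym2 V → ℝ) (v : V) :
    (∑ e ∈ H.edgeFinset, l e • edgeVector e) v = ∑ e ∈ H.incidenceFinset v, l e := by
  rw [H.incidenceFinset_eq_filter, sum_filter, Finset.sum_apply]
  refine sum_congr rfl fun e he ↦ ?_
  simp [edgeVector_apply_of_not_isDiag (H.not_isDiag_of_mem_edgeSet (H.mem_edgeFinset.1 he))]

lemma sum_sum_smul_edgeVector (s : Finset (Sym2 V)) (l : Sym2 V → ℝ) :
    ∑ v, (∑ e ∈ s, l e • edgeVector e) v = 2 * ∑ e ∈ s, l e := by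
  simp only [Finset.sum_apply, Pi.smul_apply, smul_eq_mul]
  rw [sum_comm]
  simp only [← mul_sum, sum_edgeVector, ← sum_mul]
  exact mul_comm _ _

end VertexSums

variable {G : SimpleGraph V}

lemma mem_integers_of_sum_smul_edgeVector_mem (hG : ¬ HasDisjointOddCycles G) {l : Sym2 V → ℝ}
    (hl : Function.support l ⊆ G.edgeSet) (hind : LinearIndepOn ℝ edgeVector (Function.support l))
    (hx : ∑ e, l e • edgeVector e ∈ evenLattice V) (e : Sym2 V) : l e ∈ integers ℝ := by
  classical
  have hsupp : {e | l e ∉ integers ℝ} ⊆ Function.support l := fun e he h ↦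
    he (h ▸ zero_mem _)
  obtain ⟨H, hedge⟩ : ∃ H : SimpleGraph V, H.edgeSet = {e | l e ∉ integers ℝ} := by
    refine ⟨.fromEdgeSet {e | l e ∉ integers ℝ}, ?_⟩
    rw [SimpleGraph.edgeSet_fromEdgeSet, sdiff_eq_left, Set.disjoint_left]
    exact fun e he ↦ G.not_isDiag_of_mem_edgeSet (hl (hsupp he))
  have hHG : H ≤ G := by
    rw [← SimpleGraph.edgeSet_subset_edgeSet, hedge]
    exact hsupp.trans hl
  have hxH : ∑ e ∈ H.edgeFinset, l e • edgeVector e ∈ evenLattice V := by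
    rw [← sum_add_sum_compl H.edgeFinset] at hx
    refine (add_mem_cancel_right (sum_mem fun e he ↦ ?_)).1 hx
    obtain ⟨z, hz : (z : ℝ) = l e⟩ : l e ∈ integers ℝ := by
      simpa [← SimpleGraph.mem_edgeSet, hedge] using he
    rw [← hz, Int.cast_smul_eq_zsmul]
    exact zsmul_mem (edgeVector_mem_evenLattice e) z
  have hbot : H = ⊥ := by
    refine eq_bot_of_forall_notMem (Λ := (integers ℝ).toAddSubgroup) (l := l)
      (hind.mono (hedge ▸ hsupp)) (mt (HasDisjointOddCycles.mono hHG) hG) (fun v ↦ ?_) ?_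
      fun e he ↦ hedge.subset he
    · simpa only [Subring.mem_toAddSubgroup, sum_smul_edgeVector_apply] using hxH.1 v
    · simpa only [Subring.mem_toAddSubgroup, sum_sum_smul_edgeVector,
        mul_div_cancel_left₀ _ (two_ne_zero' ℝ)] using hxH.2
  by_contra he
  have : e ∈ H.edgeSet := hedge ▸ he
  simp [hbot] at this

lemma insert_zero_subset_evenLattice (s : Set (Sym2 V)) :
    insert 0 (edgeVector '' s ∪ -(edgeVector '' s)) ⊆ (evenLattice V : Set (V → ℝ)) := by
  rintro g (rfl | ⟨e, -, rfl⟩ | ⟨e, -, he⟩)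
  · exact zero_mem _
  · exact edgeVector_mem_evenLattice e
  · exact neg_mem_iff.1 (he ▸ edgeVector_mem_evenLattice e)

lemma hasIDPOver_symmetrizedEdgePolytope (hG : ¬ HasDisjointOddCycles G) :
    HasIDPOver (evenLattice V) (symmetrizedEdgePolytope G) := by
  rintro N - _ ⟨y, hy, rfl⟩ hx
  obtain ⟨l₀, hl₀, hl₀1, hl₀y⟩ := exists_sum_smul_of_mem_convexHull_union_neg hy
  obtain ⟨l, hl, hind, hlN, hly⟩ := exists_linearIndepOn_support edgeVector ((N : ℝ) • l₀)
  have hlG : Function.support l ⊆ G.edgeSet :=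
    (hl.trans (Function.support_const_smul_subset _ _)).trans hl₀
  have hlx : ∑ e, l e • edgeVector e = (N : ℝ) • y := by
    rw [hly, ← hl₀y, smul_sum]
    simp [mul_smul]
  have hsum : ∑ e, |l e| ≤ N := by
    refine hlN.trans ?_
    simp only [Pi.smul_apply, smul_eq_mul, abs_mul, Nat.abs_cast, ← mul_sum]
    exact mul_le_of_le_one_right N.cast_nonneg hl₀1
  choose m hm using mem_integers_of_sum_smul_edgeVector_mem hG hlG hind (hlx.symm ▸ hx)
  obtain rfl : l = fun e ↦ (m e : ℝ) := (funext hm).symm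
  replace hsum : ∑ e, |(m e : ℝ)| ≤ N := hsum
  obtain ⟨f, hf, hfx⟩ := exists_fin_sum_eq_sum_zsmul (s := G.edgeSet) (m := m) (N := N)
    edgeVector (by simpa [Function.support_subset_iff] using hlG) (by exact_mod_cast hsum)
  refine ⟨f, fun k ↦ ⟨?_, insert_zero_subset_evenLattice _ (hf k)⟩, ?_⟩
  · have hne : (edgeVector '' G.edgeSet).Nonempty := by
      simpa using convexHull_nonempty_iff.1 ⟨y, hy⟩
    exact Set.insert_subset (zero_mem_convexHull_union_neg hne) (subset_convexHull ℝ _) (hf k)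
  · simp only [hfx, ← hlx, Int.cast_smul_eq_zsmul]

end Normality

section CycleVectors

variable {V : Type*} [DecidableEq V] {G : SimpleGraph V}

lemma sum_map_edgeVector_edges {v : V} (c : G.Walk v v) :
    (c.edges.map edgeVector).sum =
      (2 : ℝ) • (c.support.tail.map fun u ↦ (Pi.single u 1 : V → ℝ)).sum := by
  let f (u : V) : V → ℝ := Pi.single u 1
  have hdrop : (c.support.dropLast.map f).sum = (c.support.tail.map f).sum :=
    (c.tail_support_perm_dropLast_support.symm.map f).sum_eq
  have hedges : c.edges.map edgeVector = c.darts.map fun d ↦ f d.fst + f d.snd := by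
    rw [SimpleGraph.Walk.edges, List.map_map]
    rfl
  have hfst : c.darts.map (fun d ↦ f d.fst) = c.support.dropLast.map f := by
    rw [← c.map_fst_darts, List.map_map]; rfl
  have hsnd : c.darts.map (fun d ↦ f d.snd) = c.support.tail.map f := by
    rw [← c.map_snd_darts, List.map_map]; rfl
  rw [hedges, List.sum_map_add, hfst, hsnd, hdrop, two_smul]

lemma smul_indicator_mem_convexHull_of_isCycle {v : V} {c : G.Walk v v} (hc : c.IsCycle) :
    (2 / c.length : ℝ) • (c.support.tail.toFinset : Set V).indicator 1 ∈
      convexHull ℝ (edgeVector '' G.edgeSet) := by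
  have hlen : (c.length : ℝ) ≠ 0 := by exact_mod_cast (hc.three_le_length.trans_lt' (by simp)).ne'
  have hind : (c.support.tail.toFinset : Set V).indicator 1 =
      (c.support.tail.map fun u ↦ (Pi.single u 1 : V → ℝ)).sum := by
    rw [← List.sum_toFinset _ hc.support_nodup]
    ext u
    simp [Set.indicator_apply, Finset.sum_apply, Pi.single_apply]
  have hcard : #c.edges.toFinset = c.length := by
    rw [List.toFinset_card_of_nodup hc.edges_nodup, c.length_edges]
  have hmean : ∑ e ∈ c.edges.toFinset, (1 / c.length : ℝ) • edgeVector e ∈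
      convexHull ℝ (edgeVector '' G.edgeSet) := by
    refine (convex_convexHull ℝ _).sum_mem (fun e _ ↦ by positivity) ?_ fun e he ↦ ?_
    · simp [hcard, hlen]
    · exact subset_convexHull ℝ _
        (Set.mem_image_of_mem _ (c.edges_subset_edgeSet (List.mem_toFinset.1 he)))
  rwa [← smul_sum, List.sum_toFinset _ hc.edges_nodup, sum_map_edgeVector_edges, smul_smul,
    ← hind, one_div_mul_eq_div] at hmean

lemma indicator_sub_mem_smul_symmetrizedEdgePolytope {v w : V} {c : G.Walk v v} {c' : G.Walk w w}
    (hc : c.IsCycle) (hc' : c'.IsCycle) {N : ℝ} (hN : (c.length + c'.length : ℝ) = 2 * N) :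
    (c.support.tail.toFinset : Set V).indicator 1 - (c'.support.tail.toFinset : Set V).indicator 1 ∈
      (fun y ↦ N • y) '' symmetrizedEdgePolytope G := by
  have hpos : (0 : ℝ) < c.length := by exact_mod_cast hc.three_le_length.trans_lt' (by simp)
  have hpos' : (0 : ℝ) < c'.length := by exact_mod_cast hc'.three_le_length.trans_lt' (by simp)
  have hmem := convexHull_mono (Set.subset_union_left (t := -(edgeVector '' G.edgeSet)))
    (smul_indicator_mem_convexHull_of_isCycle hc)
  have hmem' := convexHull_mono (Set.subset_union_right (s := edgeVector '' G.edgeSet))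
    ((convexHull_neg _).symm.subset
      (Set.neg_mem_neg.2 (smul_indicator_mem_convexHull_of_isCycle hc')))
  have hN0 : 0 < N := by linarith
  have hscale {r : ℝ} (hr : 0 < r) : N * (r / (2 * N) * (2 / r)) = 1 := by field_simp
  refine ⟨_, convex_convexHull ℝ _ hmem hmem' (a := c.length / (2 * N))
    (b := c'.length / (2 * N)) (by positivity) (by positivity) ?_, ?_⟩
  · rw [← add_div, hN, div_self (by positivity)]
  · simp only [smul_neg, ← sub_eq_add_neg, smul_sub, smul_smul, hscale hpos, hscale hpos', one_smul]

end CycleVectors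

section OddFinsets

variable {V : Type*} {S T : Finset V}

lemma mem_cases_of_disjoint (hST : Disjoint S T) (v : V) :
    v ∈ S ∧ v ∉ T ∨ v ∉ S ∧ v ∈ T ∨ v ∉ S ∧ v ∉ T := by
  have : v ∈ S → v ∉ T := fun hS hT ↦ disjoint_left.1 hST hS hT
  tauto

variable [DecidableEq V]

lemma indicator_dotProduct_indicator [Fintype V] (S T : Finset V) :
    (S : Set V).indicator 1 ⬝ᵥ (T : Set V).indicator (1 : V → ℝ) = #(S ∩ T) := by
  simp [dotProduct, Set.indicator_apply, ← ite_and, ← mem_inter, inter_comm]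

variable {g : V → ℝ}

lemma indicator_sub_dotProduct_le_two [Fintype V] (hST : Disjoint S T)
    (hg : g ∈ insert 0 (Set.range edgeVector ∪ -Set.range edgeVector)) :
    ((S : Set V).indicator 1 - (T : Set V).indicator 1) ⬝ᵥ g ≤ 2 := by
  obtain rfl | ⟨⟨a, b⟩, rfl⟩ | ⟨⟨a, b⟩, hg⟩ := hg
  · simp
  · rcases mem_cases_of_disjoint hST a with ha | ha | ha <;>
      rcases mem_cases_of_disjoint hST b with hb | hb | hb <;>
      norm_num [ha, hb, sub_dotProduct]
  · obtain rfl : g = -edgeVector s(a, b) := by rw [← neg_neg g, ← hg]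
    rcases mem_cases_of_disjoint hST a with ha | ha | ha <;>
      rcases mem_cases_of_disjoint hST b with hb | hb | hb <;>
      norm_num [ha, hb, sub_dotProduct]

lemma indicator_dotProduct_div_two_mem_integers [Fintype V] (hST : Disjoint S T)
    (hg : g ∈ insert 0 (Set.range edgeVector ∪ -Set.range edgeVector))
    (h : ((S : Set V).indicator 1 - (T : Set V).indicator 1) ⬝ᵥ g = 2) :
    (S : Set V).indicator 1 ⬝ᵥ g / 2 ∈ integers ℝ := by
  obtain rfl | ⟨⟨a, b⟩, rfl⟩ | ⟨⟨a, b⟩, hg⟩ := hg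
  · simp
  · revert h
    rcases mem_cases_of_disjoint hST a with ha | ha | ha <;>
      rcases mem_cases_of_disjoint hST b with hb | hb | hb <;>
      norm_num [ha, hb, sub_dotProduct]
  · obtain rfl : g = -edgeVector s(a, b) := by rw [← neg_neg g, ← hg]
    revert h
    rcases mem_cases_of_disjoint hST a with ha | ha | ha <;>
      rcases mem_cases_of_disjoint hST b with hb | hb | hb <;>
      norm_num [ha, hb, sub_dotProduct]

/- Every summand pairs to at most `2` with `1_S - 1_T`, and on average to exactly `2`, so each of
them is `e_a + e_b` with `a, b ∈ S` or `-(e_a + e_b)` with `a, b ∈ T`. -/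
lemma even_card_of_sum_eq_indicator_sub [Finite V] {ι : Type*} [Fintype ι] {f : ι → V → ℝ}
    (hf : ∀ k, f k ∈ insert 0 (Set.range edgeVector ∪ -Set.range edgeVector))
    (hsum : ∑ k, f k = (S : Set V).indicator 1 - (T : Set V).indicator 1)
    (hST : Disjoint S T) (hcard : #S + #T = 2 * Fintype.card ι) : Even #S := by
  have := Fintype.ofFinite V
  set s : V → ℝ := (S : Set V).indicator 1 - (T : Set V).indicator 1 with hs
  have hinter : S ∩ T = ∅ := disjoint_iff_inter_eq_empty.1 hST
  have hss : ∑ k, s ⬝ᵥ f k = ∑ _k : ι, 2 := by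
    have hcard' : (#S + #T : ℝ) = 2 * Fintype.card ι := by exact_mod_cast hcard
    rw [← dotProduct_sum, hsum, hs, sub_dotProduct, dotProduct_sub, dotProduct_sub]
    simp only [indicator_dotProduct_indicator, inter_self, hinter, inter_comm T]
    simpa [mul_comm] using hcard'
  have hmax : ∀ k ∈ univ, s ⬝ᵥ f k = 2 :=
    (sum_eq_sum_iff_of_le fun k _ ↦ indicator_sub_dotProduct_le_two hST (hf k)).1 hss
  have hhalf : (S : Set V).indicator 1 ⬝ᵥ s / 2 ∈ integers ℝ := by
    rw [← hsum, dotProduct_sum, sum_div]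
    exact sum_mem fun k hk ↦ indicator_dotProduct_div_two_mem_integers hST (hf k) (hmax k hk)
  rw [hs, dotProduct_sub, indicator_dotProduct_indicator, indicator_dotProduct_indicator,
    inter_self, hinter, card_empty, Nat.cast_zero, sub_zero] at hhalf
  obtain ⟨z, hz : (z : ℝ) = #S / 2⟩ := hhalf
  rw [← Int.even_coe_nat]
  refine ⟨z, ?_⟩
  have : (#S : ℝ) = z + z := by linarith
  exact_mod_cast this

end OddFinsets

section NormalityIff

variable {V : Type*} [Fintype V] [DecidableEq V] {G : SimpleGraph V}

lemma mem_of_mem_symmetrizedEdgePolytope {x : V → ℝ} (hx : x ∈ symmetrizedEdgePolytope G)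
    (hxΛ : x ∈ evenLattice V) :
    x ∈ insert 0 (edgeVector '' G.edgeSet ∪ -(edgeVector '' G.edgeSet)) := by
  have hnorm : ∀ g ∈ edgeVector '' G.edgeSet ∪ -(edgeVector '' G.edgeSet), g ⬝ᵥ g = 2 := by
    rintro g (⟨e, he, rfl⟩ | ⟨e, he, hg⟩)
    · exact edgeVector_dotProduct_self (G.not_isDiag_of_mem_edgeSet he)
    · rw [← neg_dotProduct_neg, ← hg, edgeVector_dotProduct_self (G.not_isDiag_of_mem_edgeSet he)]
  exact eq_zero_or_mem_of_mem_convexHull hnorm hx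
    (fun g hg ↦ dotProduct_mem_integers hxΛ (insert_zero_subset_evenLattice _ (.inr hg)))
    (dotProduct_self_div_two_mem_integers hxΛ)

theorem hasIDPOver_symmetrizedEdgePolytope_iff :
    HasIDPOver (evenLattice V) (symmetrizedEdgePolytope G) ↔ ¬ HasDisjointOddCycles G := by
  refine ⟨?_, hasIDPOver_symmetrizedEdgePolytope⟩
  rintro h ⟨v, w, c, c', hc, hc', hodd, hodd', hdisj⟩
  have hcard : #c.support.tail.toFinset = c.length := by
    simp [List.toFinset_card_of_nodup hc.support_nodup]
  have hcard' : #c'.support.tail.toFinset = c'.length := by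
    simp [List.toFinset_card_of_nodup hc'.support_nodup]
  have hST : Disjoint c.support.tail.toFinset c'.support.tail.toFinset :=
    disjoint_left.2 fun x hx hx' ↦ hdisj x (List.mem_of_mem_tail (List.mem_toFinset.1 hx))
      (List.mem_of_mem_tail (List.mem_toFinset.1 hx'))
  obtain ⟨N, hN⟩ := hodd.add_odd hodd'
  have hN1 : 1 ≤ N := by
    have := hodd.pos
    omega
  obtain ⟨f, hf, hsum⟩ := h N hN1 _
    (indicator_sub_mem_smul_symmetrizedEdgePolytope hc hc' (by rw [two_mul]; exact_mod_cast hN))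
    (indicator_sub_mem_evenLattice (by rw [hcard, hcard']; exact hodd.add_odd hodd'))
  have hmem (k : Fin N) : f k ∈ insert 0 (Set.range edgeVector ∪ -Set.range edgeVector) :=
    Set.insert_subset_insert (Set.union_subset_union (Set.image_subset_range _ _)
      (Set.neg_subset_neg.2 (Set.image_subset_range _ _)))
      (mem_of_mem_symmetrizedEdgePolytope (hf k).1 (hf k).2)
  have heven := even_card_of_sum_eq_indicator_sub hmem hsum.symm hST
    (by rw [hcard, hcard', hN, Fintype.card_fin, two_mul])
  exact Nat.not_even_iff_odd.2 hodd (hcard ▸ heven)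

end NormalityIff

section Omega

/-- The lattice `ℤ^m`. -/
def integerLattice (m : ℕ) : AddSubgroup (Fin m → ℝ) :=
  AddSubgroup.pi Set.univ fun _ ↦ (integers ℝ).toAddSubgroup

lemma mem_integerLattice {m : ℕ} {x : Fin m → ℝ} : x ∈ integerLattice m ↔ IsLatticePt x := by
  simp [integerLattice, AddSubgroup.mem_pi, IsLatticePt, eq_comm]

lemma hasIDP_iff_hasIDPOver {m : ℕ} {P : Set (Fin m → ℝ)} :
    HasIDP P ↔ HasIDPOver (integerLattice m) P := by
  simp only [HasIDP, HasIDPOver, mem_integerLattice]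

variable {n : ℕ}

/-- The linear automorphism `(x₀, …, xₙ) ↦ (x₁, …, xₙ, ½ ∑ xᵢ)` of `ℝ^(n+1)`. It maps `e_i + e_j` to
its last `n` coordinates followed by `1`, and the lattice `D_(n+1)` onto `ℤ^(n+1)`. -/
noncomputable def tailSnocHalfSum (n : ℕ) : (Fin (n + 1) → ℝ) ≃ₗ[ℝ] (Fin (n + 1) → ℝ) where
  toFun x := Fin.snoc (Fin.tail x) ((∑ i, x i) / 2)
  invFun y := Fin.cons (2 * y (Fin.last n) - ∑ i : Fin n, y i.castSucc) (Fin.init y)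
  map_add' x y := by
    ext i
    cases i using Fin.lastCases <;> simp [Fin.tail, sum_add_distrib, add_div]
  map_smul' r x := by
    ext i
    cases i using Fin.lastCases <;> simp [Fin.tail, ← mul_sum, mul_div_assoc]
  left_inv x := by
    ext i
    cases i using Fin.cases <;> simp [Fin.tail, Fin.sum_univ_succ, mul_div_cancel₀]
  right_inv y := by
    ext i
    cases i using Fin.lastCases <;> simp [Fin.init, Fin.sum_univ_succ]

lemma tailSnocHalfSum_apply (x : Fin (n + 1) → ℝ) :
    tailSnocHalfSum n x = Fin.snoc (Fin.tail x) ((∑ i, x i) / 2) := rfl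

lemma tailSnocHalfSum_mem_integerLattice_iff (x : Fin (n + 1) → ℝ) :
    tailSnocHalfSum n x ∈ integerLattice (n + 1) ↔ x ∈ evenLattice (Fin (n + 1)) := by
  have hcoord : tailSnocHalfSum n x ∈ integerLattice (n + 1) ↔
      (∀ i : Fin n, x i.succ ∈ integers ℝ) ∧ (∑ i, x i) / 2 ∈ integers ℝ := by
    simp [integerLattice, AddSubgroup.mem_pi, tailSnocHalfSum_apply, Fin.forall_fin_succ', Fin.tail]
  rw [hcoord]
  refine ⟨fun ⟨hx, hsum⟩ ↦ ⟨Fin.cases ?_ hx, hsum⟩, fun ⟨hx, hsum⟩ ↦ ⟨fun i ↦ hx i.succ, hsum⟩⟩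
  have hzero : x 0 = (∑ i, x i) / 2 + (∑ i, x i) / 2 - ∑ i : Fin n, x i.succ := by
    rw [add_halves, Fin.sum_univ_succ, add_sub_cancel_right]
  exact hzero ▸ sub_mem (add_mem hsum hsum) (sum_mem fun i _ ↦ hx i)

lemma fullEdgePolytope_eq_image (G : SimpleGraph (Fin (n + 1))) :
    fullEdgePolytope G =
      (LinearMap.funLeft ℝ ℝ Fin.succ) '' convexHull ℝ (edgeVector '' G.edgeSet) := by
  rw [fullEdgePolytope, LinearMap.image_convexHull, Set.image_image]
  congr 1
  ext x
  constructor
  · rintro ⟨i, j, h, rfl⟩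
    exact ⟨s(i, j), h, rfl⟩
  · rintro ⟨⟨i, j⟩, h, rfl⟩
    exact ⟨i, j, h, rfl⟩

lemma liftTop_fullEdgePolytope (G : SimpleGraph (Fin (n + 1))) :
    liftTop (fullEdgePolytope G) = tailSnocHalfSum n '' convexHull ℝ (edgeVector '' G.edgeSet) := by
  rw [liftTop, fullEdgePolytope_eq_image, Set.image_image]
  refine Set.image_congr fun x hx ↦ ?_
  rw [tailSnocHalfSum_apply, sum_eq_two_of_mem_convexHull hx, div_self two_ne_zero]
  rfl

lemma liftBot_eq_neg_liftTop {d : ℕ} (P : Set (Fin d → ℝ)) : liftBot P = -liftTop P := by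
  rw [liftBot, liftTop, ← Set.image_neg_eq_neg, Set.image_image]
  refine Set.image_congr fun x _ ↦ ?_
  ext i
  cases i using Fin.lastCases <;> simp

lemma Omega_fullEdgePolytope (G : SimpleGraph (Fin (n + 1))) :
    Omega (fullEdgePolytope G) (fullEdgePolytope G) =
      tailSnocHalfSum n '' symmetrizedEdgePolytope G := by
  have himage (s : Set (Fin (n + 1) → ℝ)) :
      tailSnocHalfSum n '' convexHull ℝ s = convexHull ℝ (tailSnocHalfSum n '' s) :=
    (tailSnocHalfSum n).toLinearMap.image_convexHull s
  rw [Omega, liftBot_eq_neg_liftTop, liftTop_fullEdgePolytope, symmetrizedEdgePolytope, himage,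
    himage, ← convexHull_neg, convexHull_convexHull_union_left, convexHull_convexHull_union_right,
    Set.image_union, Set.image_neg_of_apply_neg_eq_neg fun x _ ↦ map_neg _ x]

end Omega

theorem stmt12_general {n : ℕ} (G : SimpleGraph (Fin (n + 1))) :
    HasIDP (Omega (fullEdgePolytope G) (fullEdgePolytope G)) ↔ ¬ HasDisjointOddCycles G := by
  rw [hasIDP_iff_hasIDPOver, Omega_fullEdgePolytope,
    hasIDPOver_image_iff _ tailSnocHalfSum_mem_integerLattice_iff,
    hasIDPOver_symmetrizedEdgePolytope_iff]

theorem stmt12 (n : ℕ) (G : SimpleGraph (Fin (n + 1)))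
    (hconn : G.Connected) (hnb : ¬ G.Colorable 2) :
    HasIDP (Omega (fullEdgePolytope G) (fullEdgePolytope G)) ↔
      ¬ ∃ (v w : Fin (n + 1)) (c : G.Walk v v) (c' : G.Walk w w),
          c.IsCycle ∧ c'.IsCycle ∧ Odd c.length ∧ Odd c'.length ∧
          ∀ x ∈ c.support, x ∉ c'.support :=
  stmt12_general G
end
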